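/- arXiv:0902.3203 — 4 statements merged into one kernel-verified Lean document; each statement's English description precedes it below -/
import Mathlib

section
/- Let f be a holomorphic function on an open neighborhood of 0 in ℂ², not identically zero near 0, and suppose the vanishing order of f at 0 equals k ≥ 1. Then for every real number c with 0 < c < 1/k, the function z ↦ |f(z)|^{-2c} is integrable on some open neighborhood of 0 with respect to Lebesgue measure on ℂ² ≅ ℝ⁴. In particular the complex singularity exponent of f at 0 satisfies c₀(f) ≥ 1/k. (Lower bound of Lemma 4.3.) -/
open MeasureTheory
open Metric Real in
lemma sing_exp_cauchy (R : ℝ) (g : ℂ → ℂ) (hg : DifferentiableOn ℂ g (closedBall 0 R))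
    (w : ℂ) (hw : w ∈ ball (0 : ℂ) R) :
    g w = (2 * π * Complex.I : ℂ)⁻¹ * ∫ θ : Set.Icc (0 : ℝ) (2 * π),
      (circleMap 0 R θ * Complex.I) * ((circleMap 0 R θ - w)⁻¹ * g (circleMap 0 R θ))
        ∂(Measure.comap Subtype.val volume) := by
  have h := hg.circleIntegral_sub_inv_smul hw
  have h2 : (2 * π * Complex.I : ℂ) ≠ 0 := by
    simp [Real.pi_ne_zero]
  rw [circleIntegral, intervalIntegral.integral_of_le (by positivity),
    ← integral_Icc_eq_integral_Ioc] at h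
  rw [eq_inv_mul_iff_mul_eq₀ h2, ← smul_eq_mul, ← h]
  rw [← integral_subtype_comap measurableSet_Icc]
  simp only [deriv_circleMap, smul_eq_mul]

open Metric Real in
lemma sing_exp_analyticAt (f : ℂ × ℂ → ℂ) (U : Set (ℂ × ℂ)) (hU : IsOpen U)
    (h0U : (0 : ℂ × ℂ) ∈ U) (hf : DifferentiableOn ℂ f U) : AnalyticAt ℂ f 0 := by
  obtain ⟨R, hR, hRU⟩ : ∃ R > 0, closedBall (0 : ℂ) R ×ˢ closedBall (0 : ℂ) R ⊆ U := by
    obtain ⟨R, hR, h⟩ := Metric.nhds_basis_closedBall.mem_iff.mp (hU.mem_nhds h0U)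
    refine ⟨R, hR, ?_⟩
    rwa [closedBall_prod_same]
  let α := Set.Icc (0 : ℝ) (2 * π)
  let X := C(α × α, ℂ)
  let ν : Measure α := Measure.comap Subtype.val volume
  have hfin : IsFiniteMeasure ν := by
    refine ⟨?_⟩
    rw [(MeasurableEmbedding.subtype_coe measurableSet_Icc).comap_apply]
    refine lt_of_le_of_lt (measure_mono ?_) (measure_Icc_lt_top (a := (0 : ℝ)) (b := 2 * π))
    rintro _ ⟨x, -, rfl⟩
    exact x.2
  let μ : Measure (α × α) := ν.prod ν
  have hint : ∀ φ : X, Integrable (fun x => φ x) μ := fun φ =>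
    φ.continuous.integrable_of_hasCompactSupport (HasCompactSupport.of_compactSpace _)
  let I0 : X →ₗ[ℂ] ℂ :=
    { toFun := fun φ => ∫ x, φ x ∂μ
      map_add' := fun φ ψ => integral_add (hint φ) (hint ψ)
      map_smul' := fun a φ => integral_smul a _ }
  let I : X →L[ℂ] ℂ := I0.mkContinuous (μ.real Set.univ) (fun φ => by
    have := norm_integral_le_of_norm_le_const (μ := μ) (f := fun x => φ x) (C := ‖φ‖)
      (Filter.Eventually.of_forall fun x => φ.norm_coe_le_norm x)
    exact this.trans (le_of_eq (mul_comm _ _)))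
  have hI : ∀ φ, I φ = ∫ x, φ x ∂μ := fun φ => rfl
  let Z1 : X := ⟨fun x => circleMap 0 R x.1, by fun_prop⟩
  let Z2 : X := ⟨fun x => circleMap 0 R x.2, by fun_prop⟩
  have hsph : ∀ θ : ℝ, circleMap 0 R θ ∈ closedBall (0 : ℂ) R := fun θ =>
    circleMap_mem_closedBall 0 hR.le θ
  let F : X := ⟨fun x => f (circleMap 0 R x.1, circleMap 0 R x.2), by
    refine hf.continuousOn.comp_continuous (by fun_prop) fun x => hRU ⟨hsph _, hsph _⟩⟩
  have hunit : ∀ (Z : X) (w : ℂ), (∀ x, Z x - w ≠ 0) → IsUnit (Z - algebraMap ℂ X w) := by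
    intro Z w h
    rw [ContinuousMap.isUnit_iff_forall_ne_zero]
    intro x
    exact h x
  have hinv : ∀ (Z : X) (w : ℂ), (∀ x, Z x - w ≠ 0) →
      ∀ x, Ring.inverse (Z - algebraMap ℂ X w) x = (Z x - w)⁻¹ := by
    intro Z w h x
    have h1 := Ring.mul_inverse_cancel _ (hunit Z w h)
    have h2 := congrArg (fun φ : X => φ x) h1
    have h3 : (Z x - w) * Ring.inverse (Z - algebraMap ℂ X w) x = 1 := h2
    exact eq_inv_of_mul_eq_one_right h3
  have hne : ∀ w ∈ ball (0 : ℂ) R, ∀ θ : ℝ, circleMap 0 R θ - w ≠ 0 := by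
    intro w hw θ h
    have := circleMap_mem_sphere (0 : ℂ) hR.le θ
    rw [sub_eq_zero.mp h] at this
    simp at this hw
    linarith
  have h0 : (0 : ℂ) ∈ ball (0 : ℂ) R := mem_ball_self hR
  let c : ℂ := (2 * π * Complex.I : ℂ)⁻¹
  let G : ℂ × ℂ → ℂ := fun z => c * c * I ((Z1 * algebraMap ℂ X Complex.I) *
    Ring.inverse (Z1 - algebraMap ℂ X z.1) * ((Z2 * algebraMap ℂ X Complex.I) *
    Ring.inverse (Z2 - algebraMap ℂ X z.2)) * F)
  have hG : AnalyticAt ℂ G 0 := by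
    have e : ∀ (Z : X) (L : ℂ × ℂ →L[ℂ] ℂ), (∀ x, Z x - 0 ≠ 0) →
        AnalyticAt ℂ (fun z : ℂ × ℂ => Ring.inverse (Z - algebraMap ℂ X (L z))) 0 := by
      intro Z L hZ
      have h1 : AnalyticAt ℂ (fun z : ℂ × ℂ => Z - algebraMap ℂ X (L z)) 0 := by
        refine analyticAt_const.sub ?_
        exact ((Algebra.linearMap ℂ X).toContinuousLinearMap.comp L).analyticAt 0
      have h2 := hunit Z 0 hZ
      obtain ⟨u, hu⟩ := h2
      have h3 : AnalyticAt ℂ (Ring.inverse : X → X) (Z - algebraMap ℂ X (L 0)) := by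
        rw [map_zero, ← hu]
        exact analyticAt_inverse u
      exact AnalyticAt.fun_comp (g := (Ring.inverse : X → X)) h3 h1
    have e1 := e Z1 (ContinuousLinearMap.fst ℂ ℂ ℂ) (fun x => hne 0 h0 x.1)
    have e2 := e Z2 (ContinuousLinearMap.snd ℂ ℂ ℂ) (fun x => hne 0 h0 x.2)
    refine analyticAt_const.mul ?_
    refine AnalyticAt.fun_comp (g := I) (I.analyticAt _) ?_
    exact ((analyticAt_const.mul e1).mul (analyticAt_const.mul e2)).mul analyticAt_const
  refine hG.congr ?_
  have hnhds : ball (0 : ℂ) R ×ˢ ball (0 : ℂ) R ∈ nhds (0 : ℂ × ℂ) :=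
    prod_mem_nhds (ball_mem_nhds 0 hR) (ball_mem_nhds 0 hR)
  filter_upwards [hnhds] with z hz
  obtain ⟨w, t⟩ := z
  obtain ⟨hw, ht⟩ := hz
  have hd1 : ∀ t ∈ closedBall (0 : ℂ) R, DifferentiableOn ℂ (fun w => f (w, t)) (closedBall 0 R) :=
    fun t ht => hf.comp (by fun_prop) (fun w hw => hRU ⟨hw, ht⟩)
  have hd2 : ∀ w ∈ closedBall (0 : ℂ) R, DifferentiableOn ℂ (fun t => f (w, t)) (closedBall 0 R) :=
    fun w hw => hf.comp (by fun_prop) (fun t ht => hRU ⟨hw, ht⟩)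
  rw [sing_exp_cauchy R (fun w => f (w, t)) (hd1 t (ball_subset_closedBall ht)) w hw]
  have h3 : ∀ θ : α, f (circleMap 0 R θ, t) = _ := fun θ =>
    sing_exp_cauchy R (fun t => f (circleMap 0 R θ, t)) (hd2 _ (hsph θ)) t ht
  simp only [h3, G, hI]
  rw [integral_prod _ (hint _), mul_assoc]
  congr 1
  rw [← integral_const_mul]
  refine integral_congr_ae (Filter.Eventually.of_forall fun x => ?_)
  simp only
  rw [← integral_const_mul, ← integral_const_mul, ← integral_const_mul, ← integral_const_mul]
  refine integral_congr_ae (Filter.Eventually.of_forall fun y => ?_)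
  change c * (circleMap 0 R x * Complex.I *
    (Ring.inverse (Z1 - algebraMap ℂ X w) : X) (x, y) *
    (circleMap 0 R y * Complex.I * (Ring.inverse (Z2 - algebraMap ℂ X t) : X) (x, y)) *
      f (circleMap 0 R x, circleMap 0 R y)) = _
  rw [hinv Z1 w (fun x => hne w hw x.1), hinv Z2 t (fun x => hne t ht x.2)]
  change c * (circleMap 0 R x * Complex.I * (circleMap 0 R x - w)⁻¹ *
    (circleMap 0 R y * Complex.I * (circleMap 0 R y - t)⁻¹) *
      f (circleMap 0 R x, circleMap 0 R y)) = _
  ring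
open Polynomial Metric in
lemma sing_exp_factor_bound (R : ℝ) (hR : 0 < R) (U : Set ℂ) (hU : IsOpen U)
    (hRU : closedBall (0 : ℂ) R ⊆ U) (k : ℕ) :
    ∀ (p : ℂ[X]) (e : ℂ → ℂ) (M : ℝ), p.Monic → p.natDegree = k → DifferentiableOn ℂ e U →
      (∀ w ∈ closedBall (0 : ℂ) R, ‖e w‖ ≤ M) → M * (4 / R) ^ k ≤ 1 / 2 →
      ∃ a : Fin k → ℂ, ∀ w ∈ closedBall (0 : ℂ) (R / 2),
        (1 / 2) ^ (k + 1) * ∏ i, ‖w - a i‖ ≤ ‖p.eval w + e w‖ := by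
  induction k with
  | zero =>
    intro p e M hp hd he heM hM
    refine ⟨fun _ => 0, fun w hw => ?_⟩
    have hp1 : p = 1 := hp.natDegree_eq_zero.mp hd
    have h1 : ‖e w‖ ≤ M := heM w (closedBall_subset_closedBall (by linarith) hw)
    have h2 : ‖(1 : ℂ)‖ ≤ ‖1 + e w‖ + ‖e w‖ := by
      have := norm_sub_le (1 + e w) (e w)
      simpa using this
    subst hp1
    simp at h2 hM ⊢
    linarith
  | succ k ih =>
    intro p e M hp hd he heM hM
    have hcont : ContinuousOn (fun w => ‖p.eval w + e w‖) (closedBall (0 : ℂ) (R / 2)) := by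
      have h1 : ContinuousOn e (closedBall (0 : ℂ) (R / 2)) :=
        he.continuousOn.mono ((closedBall_subset_closedBall (by linarith)).trans hRU)
      exact (p.continuous.continuousOn.add h1).norm
    obtain ⟨a, ha, hmin⟩ := (isCompact_closedBall (0 : ℂ) (R / 2)).exists_isMinOn
      ⟨0, mem_closedBall_self (by linarith)⟩ hcont
    have haR : a ∈ closedBall (0 : ℂ) R := closedBall_subset_closedBall (by linarith) ha
    have haU : U ∈ nhds a := hU.mem_nhds (hRU haR)
    have hXa : (X - C a : ℂ[X]).Monic := monic_X_sub_C a
    set q := p /ₘ (X - C a) with hq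
    have hqm : q.Monic := by
      rw [Monic, hq, leadingCoeff_divByMonic_of_monic hXa]
      · exact hp
      · rw [degree_X_sub_C, degree_eq_natDegree hp.ne_zero, hd]
        exact_mod_cast Nat.succ_le_succ (Nat.zero_le k)
    have hqd : q.natDegree = k := by
      rw [hq, natDegree_divByMonic _ hXa, hd, natDegree_X_sub_C]; rfl
    have hqe : ∀ w, p.eval w - p.eval a = (w - a) * q.eval w := by
      intro w
      have := congrArg (eval w) (X_sub_C_mul_divByMonic_eq_sub_modByMonic p a)
      rw [modByMonic_X_sub_C_eq_C_eval] at this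
      simpa [hq] using this.symm
    have hde : DifferentiableOn ℂ (dslope e a) U := (Complex.differentiableOn_dslope haU).mpr he
    have hM0 : 0 ≤ M := (norm_nonneg _).trans (heM a haR)
    have hdb : ∀ w ∈ closedBall (0 : ℂ) R, ‖dslope e a w‖ ≤ M * (4 / R) := by
      intro w hw
      rw [← closure_ball (0 : ℂ) hR.ne'] at hw
      refine Complex.norm_le_of_forall_mem_frontier_norm_le isBounded_ball ?_ ?_ hw
      · refine DifferentiableOn.diffContOnCl (hde.mono ?_)
        rw [closure_ball (0 : ℂ) hR.ne']; exact hRU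
      · intro z hz
        rw [frontier_ball (0 : ℂ) hR.ne'] at hz
        have hz' : ‖z‖ = R := by simpa using hz
        have ha' : ‖a‖ ≤ R / 2 := by simpa using ha
        have hza : R / 2 ≤ ‖z - a‖ := by
          have := norm_sub_norm_le z a
          linarith
        have hne : z ≠ a := by
          rintro rfl
          simp at hza; linarith
        rw [dslope_of_ne _ hne, slope_def_field, norm_div, div_le_iff₀ (by linarith)]
        have h1 : ‖e z - e a‖ ≤ 2 * M := by
          have := norm_sub_le (e z) (e a)
          have := heM z (by simp [hz'])
          have := heM a haR
          linarith
        calc ‖e z - e a‖ ≤ 2 * M := h1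
          _ = M * (4 / R) * (R / 2) := by field_simp; ring
          _ ≤ _ := by gcongr
    obtain ⟨b, hb⟩ := ih q (dslope e a) (M * (4 / R)) hqm hqd hde hdb (by
      rw [pow_succ] at hM; linarith)
    refine ⟨Fin.cons a b, fun w hw => ?_⟩
    have h1 := hb w hw
    have h2 : ‖p.eval a + e a‖ ≤ ‖p.eval w + e w‖ := hmin hw
    have h3 : (p.eval w + e w) - (p.eval a + e a) = (w - a) * (q.eval w + dslope e a w) := by
      have := sub_smul_dslope e a w
      rw [smul_eq_mul] at this
      rw [mul_add, ← hqe, this]; ring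
    have h4 : ‖w - a‖ * ‖q.eval w + dslope e a w‖ ≤ 2 * ‖p.eval w + e w‖ := by
      rw [← norm_mul, ← h3]
      have := norm_sub_le (p.eval w + e w) (p.eval a + e a)
      linarith
    rw [Fin.prod_univ_succ]
    simp only [Fin.cons_zero, Fin.cons_succ]
    have h5 := mul_le_mul_of_nonneg_left h1 (norm_nonneg (w - a))
    rw [pow_succ]
    linarith

open Metric in
lemma sing_exp_lintegral_bound (s ρ : ℝ) (hs0 : 0 < s) (hs : s < 2) :
    ∃ B : ENNReal, B ≠ ⊤ ∧ ∀ a : ℂ, ∫⁻ w in ball (0 : ℂ) ρ, ‖w - a‖ₑ ^ (-s) ≤ B := by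
  have hI : IntegrableOn (fun w : ℂ => ‖w‖ ^ (-s)) (ball 0 1) volume := by
    refine integrableOn_ball_of_norm_le_rpow (C := 1) (α := s) (by simp) (by simpa using hs) ?_ ?_
    · refine Filter.Eventually.of_forall fun w => ?_
      rw [Real.norm_of_nonneg (by positivity)]; simp
    · exact (measurable_norm.pow_const _).aestronglyMeasurable
  have hI2 : ∫⁻ w in ball (0 : ℂ) 1, ‖w‖ₑ ^ (-s) ≠ ⊤ := by
    have h := hI.2
    rw [hasFiniteIntegral_iff_enorm] at h
    refine ne_of_lt (lt_of_le_of_lt (le_of_eq ?_) h)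
    refine lintegral_congr_ae ?_
    have : ∀ᵐ w : ℂ ∂(volume.restrict (ball 0 1)), w ≠ 0 :=
      ae_restrict_of_ae (by simp [ae_iff])
    filter_upwards [this] with w hw
    have hw' : 0 < ‖w‖ := norm_pos_iff.mpr hw
    rw [Real.enorm_eq_ofReal (by positivity), ← ofReal_norm, ENNReal.ofReal_rpow_of_pos hw']
  refine ⟨(∫⁻ w in ball (0 : ℂ) 1, ‖w‖ₑ ^ (-s)) + volume (ball (0 : ℂ) ρ),
    ENNReal.add_ne_top.mpr ⟨hI2, measure_ball_lt_top.ne⟩, fun a => ?_⟩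
  have key : ∀ w : ℂ, ‖w - a‖ₑ ^ (-s) ≤
      (ball (0 : ℂ) 1).indicator (fun w => ‖w‖ₑ ^ (-s)) (w - a) + 1 := by
    intro w
    by_cases h : w - a ∈ ball (0 : ℂ) 1
    · rw [Set.indicator_of_mem h]; exact le_self_add
    · rw [Set.indicator_of_notMem h, zero_add]
      have h1 : 1 ≤ ‖w - a‖ₑ := by
        rw [← ofReal_norm]; exact ENNReal.one_le_ofReal.mpr (by simpa using h)
      rw [ENNReal.rpow_neg]
      exact ENNReal.inv_le_one.mpr (ENNReal.one_le_rpow h1 hs0)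
  calc ∫⁻ w in ball (0 : ℂ) ρ, ‖w - a‖ₑ ^ (-s)
      ≤ ∫⁻ w in ball (0 : ℂ) ρ,
        ((ball (0 : ℂ) 1).indicator (fun w => ‖w‖ₑ ^ (-s)) (w - a) + 1) :=
        lintegral_mono key
    _ = (∫⁻ w in ball (0 : ℂ) ρ,
        (ball (0 : ℂ) 1).indicator (fun w => ‖w‖ₑ ^ (-s)) (w - a)) + volume (ball (0 : ℂ) ρ) := by
        rw [lintegral_add_right _ measurable_const]; simp
    _ ≤ _ := by
        refine add_le_add ?_ le_rfl
        refine (setLIntegral_le_lintegral _ _).trans ?_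
        rw [lintegral_sub_right_eq_self
          (fun w => (ball (0 : ℂ) 1).indicator (fun w => ‖w‖ₑ ^ (-s)) w) a,
          lintegral_indicator measurableSet_ball]

lemma sing_exp_prod_bound (k : ℕ) (hk : 1 ≤ k) (c : ℝ) (hc : 0 < c) (x : Fin k → ENNReal) :
    (∏ i, x i) ^ (-(2 * c)) ≤ ∑ i, x i ^ (-(2 * c * k)) := by
  have : Nonempty (Fin k) := ⟨⟨0, hk⟩⟩
  obtain ⟨j, hj⟩ := Finite.exists_min x
  have h1 : x j ^ k ≤ ∏ i, x i := by
    calc x j ^ k = ∏ i : Fin k, x j := by simp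
      _ ≤ _ := Finset.prod_le_prod' fun i _ => hj i
  calc (∏ i, x i) ^ (-(2 * c)) ≤ (x j ^ k) ^ (-(2 * c)) := by
        rw [ENNReal.rpow_neg, ENNReal.rpow_neg, ENNReal.inv_le_inv]
        exact ENNReal.rpow_le_rpow h1 (by positivity)
    _ = x j ^ (-(2 * c * k)) := by
        rw [← ENNReal.rpow_natCast, ← ENNReal.rpow_mul]; congr 1; ring
    _ ≤ _ := Finset.single_le_sum (f := fun i => x i ^ (-(2 * c * k))) (fun _ _ => zero_le)
        (Finset.mem_univ j)


lemma sing_exp_direction (f : ℂ × ℂ → ℂ) (hf : AnalyticAt ℂ f 0) (k : ℕ) (hk : 1 ≤ k)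
    (horder_lt : ∀ j < k, iteratedFDeriv ℂ j f 0 = 0)
    (horder_ne : iteratedFDeriv ℂ k f 0 ≠ 0) :
    ∃ v : ℂ × ℂ, v ≠ 0 ∧ ∃ l : ℂ, l ≠ 0 ∧
      (fun w : ℂ => f (w • v) - l * w ^ k) =o[nhds 0] fun w => w ^ k := by
  obtain ⟨p, r, hp⟩ := hf
  have hex : ∃ v, p k (fun _ => v) ≠ 0 := by
    by_contra! h
    apply horder_ne
    ext1 v
    rw [hp.iteratedFDeriv_eq_sum_of_completeSpace, ← (p k).iteratedFDeriv_comp_diagonal 0 v]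
    have : (fun x => p k (fun _ => x)) = fun _ => (0 : ℂ) := funext h
    rw [this]
    simp
  obtain ⟨v, hv⟩ := hex
  refine ⟨v, ?_, p k (fun _ => v), hv, ?_⟩
  · rintro rfl
    apply hv
    exact (p k).map_coord_zero ⟨0, hk⟩ rfl
  have hO := hp.hasFPowerSeriesAt.isBigO_sub_partialSum_pow (k + 1)
  have ht : Filter.Tendsto (fun w : ℂ => w • v) (nhds 0) (nhds 0) := by
    have : Continuous fun w : ℂ => w • v := by fun_prop
    simpa using this.tendsto 0
  have hO2 := hO.comp_tendsto ht
  have heq : ((fun y => f (0 + y) - p.partialSum (k + 1) y) ∘ fun w : ℂ => w • v)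
      = fun w : ℂ => f (w • v) - (p k fun _ => v) * w ^ k := by
    funext w
    simp only [Function.comp, zero_add, FormalMultilinearSeries.partialSum]
    rw [Finset.sum_range_succ, Finset.sum_eq_zero, zero_add]
    · have := (p k).map_smul_univ (fun _ => w) (fun _ => v)
      rw [this]; simp [mul_comm]
    · intro j hj
      have h1 := hp.factorial_smul (w • v) j
      rw [horder_lt j (Finset.mem_range.mp hj)] at h1
      simp only [zero_apply, nsmul_eq_mul, mul_eq_zero] at h1
      rcases h1 with h1 | h1
      · exact absurd h1 (by exact_mod_cast Nat.factorial_ne_zero j)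
      · exact h1
  rw [heq] at hO2
  refine hO2.trans_isLittleO ?_
  have h3 : (fun w : ℂ => w ^ (k + 1)) =o[nhds 0] fun w : ℂ => w ^ k :=
    Asymptotics.isLittleO_pow_pow (Nat.lt_succ_self k)
  refine Asymptotics.IsBigO.trans_isLittleO ?_ h3
  refine Asymptotics.IsBigO.of_bound (‖v‖ ^ (k + 1)) (Filter.Eventually.of_forall fun w => ?_)
  simp only [Function.comp, norm_smul, norm_pow, norm_mul, norm_norm, mul_pow]
  rw [mul_comm]


open Metric Polynomial in
lemma sing_exp_model (F : ℂ × ℂ → ℂ) (U : Set (ℂ × ℂ)) (hU : IsOpen U)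
    (h0U : (0 : ℂ × ℂ) ∈ U) (hF : DifferentiableOn ℂ F U) (k : ℕ) (hk : 1 ≤ k)
    (l : ℂ) (hl : l ≠ 0)
    (hlo : (fun w : ℂ => F (w, 0) - l * w ^ k) =o[nhds 0] fun w => w ^ k)
    (c : ℝ) (hc0 : 0 < c) (hck : c < 1 / (k : ℝ)) :
    ∃ V : Set (ℂ × ℂ), IsOpen V ∧ (0 : ℂ × ℂ) ∈ V ∧
      IntegrableOn (fun z => ‖F z‖ ^ (-(2 * c))) V volume := by
  have hl' : 0 < ‖l‖ := norm_pos_iff.mpr hl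
  have hε : 0 < ‖l‖ * (1 / 4) ^ (k + 1) := by positivity
  have hev := hlo.def hε
  obtain ⟨R, hR, hRU, hRb⟩ : ∃ R > 0, closedBall (0 : ℂ) R ×ˢ closedBall (0 : ℂ) R ⊆ U ∧
      ∀ w ∈ closedBall (0 : ℂ) R,
        ‖F (w, 0) - l * w ^ k‖ ≤ ‖l‖ * (1 / 4) ^ (k + 1) * ‖w ^ k‖ := by
    obtain ⟨R, hR, h⟩ := Metric.nhds_basis_closedBall.mem_iff.mp (hU.mem_nhds h0U)
    obtain ⟨R', hR', h'⟩ := Metric.nhds_basis_closedBall.mem_iff.mp hev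
    refine ⟨min R R', lt_min hR hR', ?_, fun w hw => ?_⟩
    · rw [closedBall_prod_same]
      exact (closedBall_subset_closedBall (min_le_left _ _)).trans h
    · exact h' (closedBall_subset_closedBall (min_le_right _ _) hw)
  -- uniform closeness in the second variable
  have hRk : 0 < ‖l‖ * ((1 / 4) ^ (k + 1) * R ^ k) := by positivity
  obtain ⟨η, hη, hηU⟩ : ∃ η > 0, ∀ t ∈ ball (0 : ℂ) η, ∃ W : Set ℂ, IsOpen W ∧
      closedBall (0 : ℂ) R ⊆ W ∧ (∀ w ∈ W, (w, t) ∈ U) ∧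
      ∀ w ∈ closedBall (0 : ℂ) R, ‖F (w, t) - F (w, 0)‖ ≤ ‖l‖ * ((1 / 4) ^ (k + 1) * R ^ k) := by
    have hUc : ContinuousOn (fun z : ℂ × ℂ => F z - F (z.1, 0))
        (U ∩ {z : ℂ × ℂ | (z.1, (0 : ℂ)) ∈ U}) := by
      refine (hF.continuousOn.mono Set.inter_subset_left).sub ?_
      exact hF.continuousOn.comp (by fun_prop) fun z hz => hz.2
    have hO : IsOpen (U ∩ {z : ℂ × ℂ | (z.1, (0 : ℂ)) ∈ U}) :=
      hU.inter (hU.preimage (by fun_prop))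
    have hN := hUc.isOpen_inter_preimage hO
      (isOpen_ball (x := (0 : ℂ)) (ε := ‖l‖ * ((1 / 4) ^ (k + 1) * R ^ k)))
    obtain ⟨u, v, hu, hv, hsu, htv, huv⟩ := generalized_tube_lemma
      (isCompact_closedBall (0 : ℂ) R) (isCompact_singleton (x := (0 : ℂ))) hN (by
        rintro ⟨w, t⟩ ⟨hw, ht⟩
        obtain rfl : t = 0 := ht
        have : (w, (0 : ℂ)) ∈ U := hRU ⟨hw, mem_closedBall_self hR.le⟩
        refine ⟨⟨this, this⟩, ?_⟩
        simpa using hRk)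
    obtain ⟨η, hη, h⟩ := Metric.isOpen_iff.mp hv 0 (htv rfl)
    refine ⟨η, hη, fun t ht => ⟨u, hu, hsu, fun w hw => (huv ⟨hw, h ht⟩).1.1, fun w hw => ?_⟩⟩
    have := (huv (show (w, t) ∈ u ×ˢ v from ⟨hsu hw, h ht⟩)).2
    rw [Set.mem_preimage, mem_ball_zero_iff] at this
    exact this.le
  have hfac : ∀ t ∈ ball (0 : ℂ) η, ∃ a : Fin k → ℂ, ∀ w ∈ closedBall (0 : ℂ) (R / 2),
      ‖l‖ * (1 / 2) ^ (k + 1) * ∏ i, ‖w - a i‖ ≤ ‖F (w, t)‖ := by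
    intro t ht
    obtain ⟨W, hW, hRW, hWU, hclose⟩ := hηU t ht
    have hs1 : DifferentiableOn ℂ (fun w => l⁻¹ * F (w, t) - w ^ k) W := by
      refine DifferentiableOn.sub ?_ (by fun_prop)
      refine DifferentiableOn.const_mul ?_ _
      exact hF.comp (by fun_prop) (fun w hw => hWU w hw)
    have hs2 : ∀ w ∈ closedBall (0 : ℂ) R, ‖l⁻¹ * F (w, t) - w ^ k‖
        ≤ 2 * ((1 / 4) ^ (k + 1) * R ^ k) := by
      intro w hw
      have h1 := hclose w hw
      have h2 := hRb w hw
      have h3 : ‖w ^ k‖ ≤ R ^ k := by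
        rw [norm_pow]
        exact pow_le_pow_left₀ (norm_nonneg _) (by simpa using hw) k
      have h4 : l⁻¹ * F (w, t) - w ^ k
          = l⁻¹ * ((F (w, t) - F (w, 0)) + (F (w, 0) - l * w ^ k)) := by
        field_simp; ring
      rw [h4, norm_mul, norm_inv, inv_mul_le_iff₀ hl']
      have h5 : ‖l‖ * (1 / 4) ^ (k + 1) * ‖w ^ k‖ ≤ ‖l‖ * (1 / 4) ^ (k + 1) * R ^ k := by gcongr
      have h6 := norm_add_le (F (w, t) - F (w, 0)) (F (w, 0) - l * w ^ k)
      linarith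
    have hs3 : 2 * ((1 / 4) ^ (k + 1) * R ^ k) * (4 / R) ^ k ≤ 1 / 2 := by
      have h1 : (1 / 4 : ℝ) ^ k * R ^ k * (4 / R) ^ k = 1 := by
        rw [← mul_pow, ← mul_pow]
        have : 1 / 4 * R * (4 / R) = 1 := by field_simp
        rw [this, one_pow]
      rw [pow_succ]
      linarith
    obtain ⟨a, ha⟩ := sing_exp_factor_bound R hR W hW hRW k (X ^ k)
      (fun w => l⁻¹ * F (w, t) - w ^ k) (2 * ((1 / 4) ^ (k + 1) * R ^ k))
      (monic_X_pow k) (natDegree_X_pow k) hs1 hs2 hs3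
    refine ⟨a, fun w hw => ?_⟩
    have h := ha w hw
    have h2 : (X ^ k : ℂ[X]).eval w + (l⁻¹ * F (w, t) - w ^ k) = l⁻¹ * F (w, t) := by
      simp
    rw [h2, norm_mul, norm_inv, le_inv_mul_iff₀ hl'] at h
    rw [mul_assoc]; exact h
  -- the uniform one-variable integral bound
  have hk' : (0 : ℝ) < k := by exact_mod_cast hk
  have hs : 2 * c * k < 2 := by
    rw [lt_div_iff₀ hk'] at hck
    linarith
  obtain ⟨B, hB, hBb⟩ := sing_exp_lintegral_bound (2 * c * k) (R / 2) (by positivity) hs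
  set c0 : ENNReal := ENNReal.ofReal (‖l‖ * (1 / 2) ^ (k + 1)) with hc0def
  have hc0pos : c0 ≠ 0 := by
    rw [hc0def, Ne, ENNReal.ofReal_eq_zero, not_le]; positivity
  set D : ENNReal := c0 ^ (-(2 * c)) * (k * B) with hD
  have hDtop : D ≠ ⊤ := by
    refine ENNReal.mul_ne_top ?_ (ENNReal.mul_ne_top (by simp) hB)
    rw [Ne, ENNReal.rpow_eq_top_iff]
    push Not
    exact ⟨fun h => absurd h hc0pos, fun h => absurd h ENNReal.ofReal_ne_top⟩
  have hone : ∀ t ∈ ball (0 : ℂ) η,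
      ∫⁻ w in ball (0 : ℂ) (R / 2), ‖F (w, t)‖ₑ ^ (-(2 * c)) ≤ D := by
    intro t ht
    obtain ⟨a, ha⟩ := hfac t ht
    have hpt : ∀ w ∈ ball (0 : ℂ) (R / 2), ‖F (w, t)‖ₑ ^ (-(2 * c)) ≤
        c0 ^ (-(2 * c)) * ∑ i, ‖w - a i‖ₑ ^ (-(2 * c * k)) := by
      intro w hw
      have h1 : c0 * ∏ i, ‖w - a i‖ₑ ≤ ‖F (w, t)‖ₑ := by
        have := ENNReal.ofReal_le_ofReal (ha w (ball_subset_closedBall hw))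
        rw [ENNReal.ofReal_mul (by positivity),
          ENNReal.ofReal_prod_of_nonneg (fun _ _ => norm_nonneg _), ofReal_norm] at this
        simpa only [ofReal_norm] using this
      calc ‖F (w, t)‖ₑ ^ (-(2 * c)) ≤ (c0 * ∏ i, ‖w - a i‖ₑ) ^ (-(2 * c)) := by
            rw [ENNReal.rpow_neg, ENNReal.rpow_neg, ENNReal.inv_le_inv]
            exact ENNReal.rpow_le_rpow h1 (by positivity)
        _ = c0 ^ (-(2 * c)) * (∏ i, ‖w - a i‖ₑ) ^ (-(2 * c)) := by
            refine ENNReal.mul_rpow_of_ne_top ENNReal.ofReal_ne_top ?_ _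
            exact ENNReal.prod_ne_top fun _ _ => enorm_ne_top
        _ ≤ _ := by
            gcongr
            exact sing_exp_prod_bound k hk c hc0 _
    calc ∫⁻ w in ball (0 : ℂ) (R / 2), ‖F (w, t)‖ₑ ^ (-(2 * c))
        ≤ ∫⁻ w in ball (0 : ℂ) (R / 2),
          c0 ^ (-(2 * c)) * ∑ i, ‖w - a i‖ₑ ^ (-(2 * c * k)) :=
          setLIntegral_mono' measurableSet_ball hpt
      _ = c0 ^ (-(2 * c)) * ∑ i, ∫⁻ w in ball (0 : ℂ) (R / 2),
          ‖w - a i‖ₑ ^ (-(2 * c * k)) := by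
          rw [lintegral_const_mul _ (by fun_prop), lintegral_finsetSum _ (fun i _ => by fun_prop)]
      _ ≤ c0 ^ (-(2 * c)) * ∑ i : Fin k, B := by
          gcongr with i
          exact hBb (a i)
      _ = D := by simp [hD]
  -- assembling
  set η' := min η R with hη'
  have hη'pos : 0 < η' := lt_min hη hR
  have hVo : IsOpen (ball (0 : ℂ) (R / 2) ×ˢ ball (0 : ℂ) η') := isOpen_ball.prod isOpen_ball
  have hVU : ball (0 : ℂ) (R / 2) ×ˢ ball (0 : ℂ) η' ⊆ U := by
    refine (Set.prod_mono ?_ ?_).trans hRU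
    · exact (ball_subset_ball (by linarith)).trans ball_subset_closedBall
    · exact (ball_subset_ball (min_le_right _ _)).trans ball_subset_closedBall
  refine ⟨ball (0 : ℂ) (R / 2) ×ˢ ball (0 : ℂ) η', hVo,
    ⟨mem_ball_self (by linarith), mem_ball_self hη'pos⟩, ?_⟩
  have hmeas : AEStronglyMeasurable F (volume.restrict (ball (0 : ℂ) (R / 2) ×ˢ ball (0 : ℂ) η')) :=
    (hF.continuousOn.mono hVU).aestronglyMeasurable hVo.measurableSet
  refine ⟨(hmeas.norm.aemeasurable.pow_const _).aestronglyMeasurable, ?_⟩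
  rw [hasFiniteIntegral_iff_enorm]
  have hle : ∀ z, ‖‖F z‖ ^ (-(2 * c))‖ₑ ≤ ‖F z‖ₑ ^ (-(2 * c)) := by
    intro z
    rcases (norm_nonneg (F z)).eq_or_lt with h | h
    · rw [← h, Real.zero_rpow (by linarith)]; simp
    · rw [Real.enorm_eq_ofReal (by positivity), ← ofReal_norm, ENNReal.ofReal_rpow_of_pos h]
  refine lt_of_le_of_lt (lintegral_mono hle) ?_
  have hmeas2 := hmeas.enorm.pow_const (-(2 * c))
  rw [Measure.volume_eq_prod, ← Measure.prod_restrict] at hmeas2 ⊢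
  rw [lintegral_prod_symm _ hmeas2]
  calc ∫⁻ t in ball (0 : ℂ) η', ∫⁻ w in ball (0 : ℂ) (R / 2), ‖F (w, t)‖ₑ ^ (-(2 * c))
      ≤ ∫⁻ t in ball (0 : ℂ) η', D :=
        setLIntegral_mono' measurableSet_ball fun t ht =>
          hone t (ball_subset_ball (min_le_left _ _) ht)
    _ = D * volume (ball (0 : ℂ) η') := by simp
    _ < ⊤ := ENNReal.mul_lt_top hDtop.lt_top measure_ball_lt_top

/-- Lower bound of Lemma 4.3: if `f` is holomorphic near `0 ∈ ℂ²`, not identically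
zero near `0`, with vanishing order `k ≥ 1` at `0`, then for every `0 < c < 1/k`
the function `z ↦ ‖f z‖ ^ (-2c)` is integrable on some open neighborhood of `0`;
in particular `c₀(f) ≥ 1/k`. -/
theorem singularity_exponent_ge_inv_order
    (f : ℂ × ℂ → ℂ) (U : Set (ℂ × ℂ)) (hU : IsOpen U) (h0U : (0 : ℂ × ℂ) ∈ U)
    (hf : DifferentiableOn ℂ f U)
    (hnz : ¬ ∀ᶠ z in nhds (0 : ℂ × ℂ), f z = 0)
    (k : ℕ) (hk : 1 ≤ k)
    (horder_lt : ∀ j < k, iteratedFDeriv ℂ j f 0 = 0)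
    (horder_ne : iteratedFDeriv ℂ k f 0 ≠ 0)
    (c : ℝ) (hc0 : 0 < c) (hck : c < 1 / (k : ℝ)) :
    ∃ V : Set (ℂ × ℂ), IsOpen V ∧ (0 : ℂ × ℂ) ∈ V ∧
      IntegrableOn (fun z => ‖f z‖ ^ (-(2 * c))) V volume := by
  obtain ⟨v, hv, l, hl, hlo⟩ := sing_exp_direction f (sing_exp_analyticAt f U hU h0U hf) k hk
    horder_lt horder_ne
  obtain ⟨L, hL⟩ := SeparatingDual.exists_continuousLinearEquiv_apply_eq (R := ℂ)
    (x := ((1 : ℂ), (0 : ℂ))) (y := v) (by simp) hv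
  have hLw : ∀ w : ℂ, L (w, 0) = w • v := by
    intro w
    rw [← hL, ← map_smul]; simp
  obtain ⟨V, hV, h0V, hint⟩ := sing_exp_model (f ∘ L) (L ⁻¹' U) (hU.preimage L.continuous)
    (by simpa using h0U) (hf.comp L.differentiable.differentiableOn fun z hz => hz) k hk l hl
    (by simpa [hLw] using hlo) c hc0 hck
  refine ⟨L '' V, L.toHomeomorph.isOpenMap V hV, ⟨0, h0V, by simp⟩, ?_⟩
  have hemb : MeasurableEmbedding L := L.toHomeomorph.measurableEmbedding
  have hvol : (volume : Measure (ℂ × ℂ)).IsAddHaarMeasure := by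
    rw [Measure.volume_eq_prod]; infer_instance
  have hhaar : (Measure.map L (volume : Measure (ℂ × ℂ))).IsAddHaarMeasure :=
    L.isAddHaarMeasure_map volume
  have h1 : IntegrableOn (fun z => ‖f z‖ ^ (-(2 * c))) (L '' V)
      (Measure.map L (volume : Measure (ℂ × ℂ))) := by
    rw [hemb.integrableOn_map_iff, Set.preimage_image_eq _ L.injective]
    exact hint
  rw [Measure.isAddLeftInvariant_eq_smul (volume : Measure (ℂ × ℂ))
    (Measure.map L (volume : Measure (ℂ × ℂ))), IntegrableOn, Measure.restrict_smul]
  exact h1.smul_measure_nnreal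
end

section
/- Let f be a holomorphic function on an open neighborhood of 0 in ℂ², not identically zero near 0, with vanishing order k ≥ 1 at 0, and suppose its complex singularity exponent at 0 equals 1/k; that is, for every real c > 1/k the function z ↦ |f(z)|^{-2c} fails to be integrable on every open neighborhood of 0. Then f factors locally as f = g·h^k: there exist an open neighborhood V of 0 and holomorphic functions g, h on V with g(0) ≠ 0, h(0) = 0, h of vanishing order exactly 1 at 0, such that f(z) = g(z)·h(z)^k for all z ∈ V. (Equality case of Lemma 4.3.) -/
open MeasureTheory

/-- A continuous map into `C(X, ℂ)` all of whose evaluations are holomorphic is holomorphic. -/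
lemma cx_differentiableOn_of_eval {X : Type*} [TopologicalSpace X] [CompactSpace X]
    {W : Set ℂ} (hW : IsOpen W) {Φ : ℂ → C(X, ℂ)} (hc : ContinuousOn Φ W)
    (hd : ∀ x, DifferentiableOn ℂ (fun z => Φ z x) W) : AnalyticOnNhd ℂ Φ W := by
  intro z₀ hz₀
  obtain ⟨R, hR, hball⟩ := Metric.nhds_basis_closedBall.mem_iff.1 (hW.mem_nhds hz₀)
  lift R to NNReal using hR.le
  have hci : CircleIntegrable Φ z₀ R :=
    (hc.mono (Metric.sphere_subset_closedBall.trans hball)).circleIntegrable R.2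
  have hps := hasFPowerSeriesOn_cauchy_integral hci (by exact_mod_cast hR)
  refine (hps.analyticAt).congr ?_
  filter_upwards [Metric.ball_mem_nhds z₀ hR] with w hw
  ext x
  have hci2 : CircleIntegrable (fun z => (z - w)⁻¹ • Φ z) z₀ R := by
    apply ContinuousOn.circleIntegrable R.2
    refine ContinuousOn.smul (ContinuousOn.inv₀ (f := fun z : ℂ => z - w) (by fun_prop) ?_)
      (hc.mono (Metric.sphere_subset_closedBall.trans hball))
    intro z hz h
    rw [sub_eq_zero] at h
    subst h
    rw [Metric.mem_sphere] at hz
    rw [Metric.mem_ball] at hw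
    exact hw.ne hz
  have hev : (∮ z in C(z₀, R), (z - w)⁻¹ • Φ z) x = ∮ z in C(z₀, R), (z - w)⁻¹ • Φ z x := by
    have := (ContinuousMap.evalCLM ℂ x : C(X, ℂ) →L[ℂ] ℂ).intervalIntegral_comp_comm hci2.out
    simp only [circleIntegral]
    simp only [ContinuousMap.evalCLM_apply] at this
    rw [← this]
    rfl
  rw [ContinuousMap.smul_apply, hev]
  have := (((hd x).mono hball).diffContOnCl_ball (subset_refl _)).two_pi_i_inv_smul_circleIntegral_sub_inv_smul hw
  rw [this]

lemma cx_curry_analytic {X : Type*} [TopologicalSpace X] [CompactSpace X]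
    {W : Set ℂ} (hW : IsOpen W) {F : ℂ → X → ℂ}
    (hc : ContinuousOn (fun p : ℂ × X => F p.1 p.2) (W ×ˢ Set.univ))
    (hd : ∀ x, DifferentiableOn ℂ (fun z => F z x) W) :
    ∃ Φ : ℂ → C(X, ℂ), AnalyticOnNhd ℂ Φ W ∧ ∀ z ∈ W, ∀ x, Φ z x = F z x := by
  classical
  have hcz : ∀ z ∈ W, Continuous (F z) := by
    intro z hz
    have : Continuous fun x : X => (fun p : ℂ × X => F p.1 p.2) (z, x) :=
      hc.comp_continuous (by fun_prop) (by intro x; simp [hz])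
    exact this
  let Φ : ℂ → C(X, ℂ) := fun z => if hz : z ∈ W then ⟨F z, hcz z hz⟩ else 0
  have hΦ : ∀ z ∈ W, ∀ x, Φ z x = F z x := by
    intro z hz x; simp [Φ, hz]
  refine ⟨Φ, cx_differentiableOn_of_eval hW ?_ ?_, hΦ⟩
  · rw [continuousOn_iff_continuous_domRestrict]
    let G : C(W × X, ℂ) := ⟨fun p => F p.1 p.2, by
      refine hc.comp_continuous (f := fun p : W × X => ((p.1 : ℂ), p.2)) (by fun_prop) ?_
      intro p; simp⟩
    have := G.curry.continuous
    convert this using 1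
    ext z x
    simp [G, hΦ]
  · intro x
    exact (hd x).congr (fun z hz => hΦ z hz x)

/-- circle integral as a continuous linear functional. -/
lemma cx_circle_functional (r : ℝ) (hr : 0 ≤ r) :
    ∃ I : C(Metric.sphere (0 : ℂ) r, ℂ) →L[ℂ] ℂ, ∀ (φ : C(Metric.sphere (0 : ℂ) r, ℂ)) (ψ : ℂ → ℂ),
      (∀ x, φ x = ψ x) → I φ = ∮ ζ in C(0, r), ψ ζ := by
  let e : ℝ → Metric.sphere (0 : ℂ) r := fun θ => ⟨circleMap 0 r θ, circleMap_mem_sphere 0 hr θ⟩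
  have he : Continuous e := by
    apply Continuous.subtype_mk; exact continuous_circleMap 0 r
  have hcd : Continuous (deriv (circleMap 0 r)) := by
    have : deriv (circleMap 0 r) = fun θ => circleMap 0 r θ * Complex.I := by
      ext θ; simp
    rw [this]; fun_prop
  have hInteg : ∀ φ : C(Metric.sphere (0 : ℂ) r, ℂ), IntervalIntegrable
      (fun θ => deriv (circleMap 0 r) θ • φ (e θ)) volume 0 (2 * Real.pi) := by
    intro φ
    apply Continuous.intervalIntegrable
    exact hcd.smul (φ.continuous.comp he)
  let I0 : C(Metric.sphere (0 : ℂ) r, ℂ) →ₗ[ℂ] ℂ :=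
    { toFun := fun φ => ∫ θ in (0 : ℝ)..2 * Real.pi, deriv (circleMap 0 r) θ • φ (e θ)
      map_add' := by
        intro φ ψ
        rw [← intervalIntegral.integral_add (hInteg φ) (hInteg ψ)]
        simp [mul_add]
      map_smul' := by
        intro c φ
        simp only [RingHom.id_apply]
        rw [← intervalIntegral.integral_smul]
        congr 1
        ext θ
        simp; ring }
  refine ⟨I0.mkContinuous (|r| * |2 * Real.pi - 0|) ?_, ?_⟩
  · intro φ
    have : ‖∫ θ in (0 : ℝ)..2 * Real.pi, deriv (circleMap 0 r) θ • φ (e θ)‖ ≤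
        (|r| * ‖φ‖) * |2 * Real.pi - 0| := by
      apply intervalIntegral.norm_integral_le_of_norm_le_const
      intro θ _
      rw [norm_smul]
      gcongr
      · simp
      · exact φ.norm_coe_le_norm _
    calc _ ≤ _ := this
      _ = _ := by ring
  · intro φ ψ h
    show ∫ θ in (0 : ℝ)..2 * Real.pi, deriv (circleMap 0 r) θ • φ (e θ) = _
    simp only [circleIntegral, h, e]

/-- Parametric circle integrals with respect to a one-variable parameter. -/
lemma cx_param_one {W : Set ℂ} (hW : IsOpen W) {r : ℝ} (hr : 0 ≤ r) {F : ℂ × ℂ → ℂ}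
    (hc : ContinuousOn F (W ×ˢ Metric.sphere 0 r))
    (hd : ∀ ζ ∈ Metric.sphere (0 : ℂ) r, DifferentiableOn ℂ (fun z => F (z, ζ)) W) :
    AnalyticOnNhd ℂ (fun z => ∮ ζ in C(0, r), F (z, ζ)) W := by
  obtain ⟨I, hI⟩ := cx_circle_functional r hr
  obtain ⟨Φ, hΦ, hΦe⟩ := cx_curry_analytic (X := Metric.sphere (0 : ℂ) r) hW
    (F := fun z x => F (z, x))
    (hc.comp (f := fun p : ℂ × Metric.sphere (0 : ℂ) r => (p.1, (p.2 : ℂ)))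
      (by fun_prop) (by intro p hp; simp at hp ⊢; exact hp))
    (fun x => hd x x.2)
  intro z hz
  have : AnalyticAt ℂ (fun z => I (Φ z)) z := (I.analyticAt _).comp (hΦ z hz)
  refine this.congr ?_
  filter_upwards [hW.mem_nhds hz] with w hw
  exact hI _ _ (hΦe w hw)

/-- The Cauchy-type integral is jointly analytic. -/
lemma cx_param_two {W : Set ℂ} (hW : IsOpen W) {r : ℝ} (hr : 0 ≤ r) {F : ℂ × ℂ → ℂ}
    (hc : ContinuousOn F (W ×ˢ Metric.sphere 0 r))
    (hd : ∀ ζ ∈ Metric.sphere (0 : ℂ) r, DifferentiableOn ℂ (fun z => F (z, ζ)) W) :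
    AnalyticOnNhd ℂ (fun p : ℂ × ℂ => ∮ ζ in C(0, r), (ζ - p.2)⁻¹ • F (p.1, ζ))
      (W ×ˢ Metric.ball 0 r) := by
  obtain ⟨I, hI⟩ := cx_circle_functional r hr
  obtain ⟨Φ, hΦ, hΦe⟩ := cx_curry_analytic (X := Metric.sphere (0 : ℂ) r) hW
    (F := fun z x => F (z, x))
    (hc.comp (f := fun p : ℂ × Metric.sphere (0 : ℂ) r => (p.1, (p.2 : ℂ)))
      (by fun_prop) (by intro p hp; simp at hp ⊢; exact hp))
    (fun x => hd x x.2)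
  have hne : ∀ w ∈ Metric.ball (0 : ℂ) r, ∀ x : Metric.sphere (0 : ℂ) r, (x : ℂ) - w ≠ 0 := by
    intro w hw x h
    rw [sub_eq_zero] at h
    have hx := x.2
    rw [h] at hx
    simp at hx hw
    exact hw.ne hx
  obtain ⟨Ψ, hΨ, hΨe⟩ := cx_curry_analytic (X := Metric.sphere (0 : ℂ) r)
    (W := Metric.ball (0 : ℂ) r) Metric.isOpen_ball
    (F := fun w x => ((x : ℂ) - w)⁻¹)
    (by
      apply ContinuousOn.inv₀ (by fun_prop)
      intro p hp
      exact hne _ hp.1 _)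
    (fun x => by
      apply DifferentiableOn.inv (by fun_prop)
      intro w hw
      exact hne w hw x)
  rintro ⟨z, w⟩ ⟨hz, hw⟩
  have h1 : AnalyticAt ℂ (fun p : ℂ × ℂ => Φ p.1) (z, w) :=
    AnalyticAt.fun_comp (g := Φ) (f := Prod.fst) (hΦ z hz) analyticAt_fst
  have h2 : AnalyticAt ℂ (fun p : ℂ × ℂ => Ψ p.2) (z, w) :=
    AnalyticAt.fun_comp (g := Ψ) (f := Prod.snd) (hΨ w hw) analyticAt_snd
  have : AnalyticAt ℂ (fun p : ℂ × ℂ => I (Ψ p.2 * Φ p.1)) (z, w) :=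
    (I.analyticAt _).fun_comp (h2.mul h1)
  refine this.congr ?_
  filter_upwards [(hW.prod Metric.isOpen_ball).mem_nhds (Set.mk_mem_prod hz hw)] with q hq
  refine hI _ _ ?_
  intro x
  simp [hΦe _ hq.1, hΨe _ hq.2]

/-- Osgood: holomorphic functions of two variables are analytic. -/
lemma cx_osgood {f : ℂ × ℂ → ℂ} {U : Set (ℂ × ℂ)} (hU : IsOpen U) (h0 : (0 : ℂ × ℂ) ∈ U)
    (hf : DifferentiableOn ℂ f U) : AnalyticAt ℂ f 0 := by
  obtain ⟨r, hr, hball⟩ := Metric.nhds_basis_closedBall.mem_iff.1 (hU.mem_nhds h0)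
  have hsub : ∀ z ∈ Metric.closedBall (0 : ℂ) r, ∀ w ∈ Metric.closedBall (0 : ℂ) r,
      (z, w) ∈ U := by
    intro z hz w hw
    apply hball
    rw [← Prod.mk_zero_zero, ← closedBall_prod_same]
    exact ⟨hz, hw⟩
  have h := cx_param_two (W := Metric.ball 0 r) Metric.isOpen_ball hr.le (F := f)
    (hf.continuousOn.mono (by
      rintro ⟨z, w⟩ ⟨hz, hw⟩
      exact hsub z (Metric.ball_subset_closedBall hz) w (Metric.sphere_subset_closedBall hw)))
    (by
      intro ζ hζ
      refine hf.comp (f := fun z => (z, ζ)) (by fun_prop) ?_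
      intro z hz
      exact hsub z (Metric.ball_subset_closedBall hz) ζ (Metric.sphere_subset_closedBall hζ))
  have h00 := h (0, 0) ⟨Metric.mem_ball_self hr, Metric.mem_ball_self hr⟩
  have h2 := analyticAt_const (𝕜 := ℂ) (v := (2 * Real.pi * Complex.I : ℂ)⁻¹) (x := ((0 : ℂ), (0 : ℂ))) |>.smul h00
  refine h2.congr ?_
  filter_upwards [(Metric.isOpen_ball.prod Metric.isOpen_ball).mem_nhds
    (Set.mk_mem_prod (Metric.mem_ball_self (x := (0 : ℂ)) hr) (Metric.mem_ball_self (x := (0 : ℂ)) hr))] with q hq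
  have hdq : DifferentiableOn ℂ (fun w => f (q.1, w)) (Metric.closedBall 0 r) := by
    refine hf.comp (f := fun w => (q.1, w)) (by fun_prop) ?_
    intro w hw
    exact hsub _ (Metric.ball_subset_closedBall hq.1) w hw
  exact (hdq.diffContOnCl_ball (subset_refl _)).two_pi_i_inv_smul_circleIntegral_sub_inv_smul hq.2

lemma cx_factor_aux (K : Set ℂ) : ∀ (N : ℕ) (F : ℂ → ℂ), AnalyticOnNhd ℂ F K →
    (∀ w ∈ K, analyticOrderAt F w ≠ ⊤) → ({w ∈ K | F w = 0}).Finite →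
    ({w ∈ K | F w = 0}).ncard ≤ N →
    ∃ (ι : Type) (_ : Fintype ι) (a : ι → ℂ) (g : ℂ → ℂ), (∀ i, a i ∈ K ∧ F (a i) = 0) ∧
      AnalyticOnNhd ℂ g K ∧ (∀ w ∈ K, g w ≠ 0) ∧ ∀ w, F w = (∏ i, (w - a i)) * g w := by
  classical
  intro N
  induction N with
  | zero =>
    intro F hF hord hfin hcard
    refine ⟨Empty, inferInstance, Empty.elim, F, by simp, hF, ?_, by simp⟩
    intro w hw h0
    have : {w ∈ K | F w = 0} = ∅ := (Set.ncard_eq_zero hfin).1 (by omega)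
    have hh : w ∈ {w ∈ K | F w = 0} := ⟨hw, h0⟩
    rw [this] at hh; exact hh
  | succ N ih =>
    intro F hF hord hfin hcard
    by_cases hne : ∃ a ∈ K, F a = 0
    swap
    · push Not at hne
      exact ⟨Empty, inferInstance, Empty.elim, F, by simp, hF, hne, by simp⟩
    obtain ⟨a, haK, ha0⟩ := hne
    obtain ⟨n, hn⟩ := ENat.ne_top_iff_exists.1 (hord a haK)
    obtain ⟨g0, hg0, hg0a, hg0e⟩ := ((hF a haK).analyticOrderAt_eq_natCast).1 hn.symm
    have hn0 : n ≠ 0 := by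
      rintro rfl
      have := hg0e.self_of_nhds
      simp [ha0] at this
      exact hg0a this.symm
    let G : ℂ → ℂ := Function.update (fun w => F w / (w - a) ^ n) a (g0 a)
    have hFG : ∀ w, F w = (w - a) ^ n * G w := by
      intro w
      by_cases hw : w = a
      · subst hw; simp [ha0, hn0]
      · simp only [G, Function.update_of_ne hw]
        rw [mul_div_cancel₀]
        exact pow_ne_zero _ (sub_ne_zero.2 hw)
    have hGa : G a = g0 a := by simp [G]
    have hGana : AnalyticOnNhd ℂ G K := by
      intro w hw
      by_cases hwa : w = a
      · subst hwa
        refine hg0.congr ?_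
        filter_upwards [hg0e] with x hx
        by_cases hxw : x = w
        · subst hxw; exact hGa.symm
        · have h1 := hFG x
          rw [hx, smul_eq_mul] at h1
          exact mul_left_cancel₀ (pow_ne_zero _ (sub_ne_zero.2 hxw)) h1
      · have : AnalyticAt ℂ (fun w => F w / (w - a) ^ n) w := by
          refine (hF w hw).div ((analyticAt_id.sub analyticAt_const).pow n) ?_
          exact pow_ne_zero _ (sub_ne_zero.2 hwa)
        refine this.congr ?_
        filter_upwards [isOpen_ne.mem_nhds hwa] with x hx
        simp only [G, Function.update_of_ne hx]
    have hGF : ∀ w, G w = 0 → F w = 0 := by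
      intro w h; rw [hFG, h, mul_zero]
    have hss : {w ∈ K | G w = 0} ⊆ {w ∈ K | F w = 0} \ {a} := by
      rintro w ⟨hw, h⟩
      refine ⟨⟨hw, hGF w h⟩, ?_⟩
      rintro rfl
      exact hg0a (hGa ▸ h)
    have hordG : ∀ w ∈ K, analyticOrderAt G w ≠ ⊤ := by
      intro w hw htop
      apply hord w hw
      rw [analyticOrderAt_eq_top] at htop ⊢
      filter_upwards [htop] with x hx using hGF x hx
    have hcG : ({w ∈ K | G w = 0}).ncard ≤ N := by
      have h1 := Set.ncard_le_ncard hss (hfin.subset Set.sdiff_subset)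
      have h2 := Set.ncard_sdiff_singleton_lt_of_mem (s := {w ∈ K | F w = 0}) (a := a) ⟨haK, ha0⟩ hfin
      omega
    obtain ⟨ι, hι, b, g, hb, hg, hgne, hprod⟩ :=
      ih G hGana hordG (hfin.subset (hss.trans Set.sdiff_subset)) hcG
    refine ⟨Fin n ⊕ ι, inferInstance, Sum.elim (fun _ => a) b, g, ?_, hg, hgne, ?_⟩
    · rintro (i | i)
      · exact ⟨haK, ha0⟩
      · exact ⟨(hb i).1, hGF _ (hb i).2⟩
    · intro w
      rw [hFG, hprod, Fintype.prod_sum_type]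
      simp [mul_assoc]

lemma cx_factor {r : ℝ} (hr : 0 < r) {F : ℂ → ℂ}
    (hF : AnalyticOnNhd ℂ F (Metric.closedBall 0 r))
    (hne : ∀ w ∈ Metric.sphere (0 : ℂ) r, F w ≠ 0) :
    ∃ (ι : Type) (_ : Fintype ι) (a : ι → ℂ) (g : ℂ → ℂ), (∀ i, a i ∈ Metric.ball 0 r) ∧
      AnalyticOnNhd ℂ g (Metric.closedBall 0 r) ∧ (∀ w ∈ Metric.closedBall 0 r, g w ≠ 0) ∧
      ∀ w, F w = (∏ i, (w - a i)) * g w := by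
  have hpre : IsPreconnected (Metric.closedBall (0 : ℂ) r) :=
    (convex_closedBall _ _).isPreconnected
  have hrs : (r : ℂ) ∈ Metric.sphere (0 : ℂ) r := by simp [abs_of_pos hr]
  have hnz : ∀ w ∈ Metric.closedBall (0 : ℂ) r, ¬ (∀ᶠ x in nhds w, F x = 0) := by
    intro w hw h
    exact hne _ hrs (hF.eqOn_zero_of_preconnected_of_eventuallyEq_zero hpre hw h
      (Metric.sphere_subset_closedBall hrs))
  have hfin : ({w ∈ Metric.closedBall (0 : ℂ) r | F w = 0}).Finite := by
    by_contra hinf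
    obtain ⟨x, hx, hacc⟩ := Set.Infinite.exists_accPt_of_subset_isCompact
      (K := Metric.closedBall (0 : ℂ) r) hinf
      (isCompact_closedBall _ _) (Set.sep_subset _ _)
    apply hnz x hx
    rw [← (hF x hx).frequently_zero_iff_eventually_zero]
    rw [accPt_iff_frequently_nhdsNE] at hacc
    exact hacc.mono fun y hy => hy.2
  obtain ⟨ι, hι, a, g, ha, hg, hgn, hp⟩ := cx_factor_aux _ _ F hF (by
    intro w hw h
    rw [analyticOrderAt_eq_top] at h
    exact hnz w hw h) hfin le_rfl
  refine ⟨ι, hι, a, g, ?_, hg, hgn, hp⟩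
  intro i
  obtain ⟨h1, h2⟩ := ha i
  have h3 : a i ∉ Metric.sphere (0 : ℂ) r := fun h => hne _ h h2
  simp at h1 h3 ⊢
  exact lt_of_le_of_ne h1 h3

lemma cx_logint {r : ℝ} (hr : 0 < r) {F g : ℂ → ℂ} {ι : Type} [Fintype ι] {a : ι → ℂ}
    (ha : ∀ i, a i ∈ Metric.ball (0 : ℂ) r)
    (hg : AnalyticOnNhd ℂ g (Metric.closedBall 0 r))
    (hgn : ∀ w ∈ Metric.closedBall 0 r, g w ≠ 0)
    (hF : ∀ᶠ w in nhdsSet (Metric.closedBall (0 : ℂ) r), F w = (∏ i, (w - a i)) * g w) (j : ℕ) :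
    (∮ w in C(0, r), w ^ j * (deriv F w / F w)) = 2 * Real.pi * Complex.I * ∑ i, a i ^ j := by
  have hane : ∀ w ∈ Metric.sphere (0 : ℂ) r, ∀ i, w - a i ≠ 0 := by
    intro w hw i h
    rw [sub_eq_zero] at h
    have := ha i
    rw [← h] at this
    simp at this hw
    exact this.ne hw
  have hld : ∀ w ∈ Metric.sphere (0 : ℂ) r, w ^ j * (deriv F w / F w) =
      (∑ i, (w - a i)⁻¹ • w ^ j) + w ^ j * (deriv g w / g w) := by
    intro w hw
    have hw' := Metric.sphere_subset_closedBall hw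
    have he : F =ᶠ[nhds w] fun w => (∏ i, (w - a i)) * g w :=
      (hF.filter_mono (nhds_le_nhdsSet hw'))
    have h1 : logDeriv (fun w => (∏ i, (w - a i)) * g w) w =
        logDeriv (fun w => ∏ i, (w - a i)) w + logDeriv g w := by
      apply logDeriv_mul
      · exact Finset.prod_ne_zero_iff.2 fun i _ => hane w hw i
      · exact hgn w hw'
      · fun_prop
      · exact (hg w hw').differentiableAt
    have h2 : logDeriv (fun w => ∏ i, (w - a i)) w = ∑ i, (w - a i)⁻¹ := by
      have := logDeriv_prod (s := Finset.univ) (f := fun i (w : ℂ) => w - a i) (x := w)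
        (fun i _ => hane w hw i) (fun i _ => by fun_prop)
      rw [this]
      refine Finset.sum_congr rfl fun i _ => ?_
      simp [logDeriv_apply]
    rw [he.deriv_eq, he.self_of_nhds]
    have h3 := h1
    rw [h2, logDeriv_apply, logDeriv_apply] at h3
    rw [h3, mul_add, Finset.mul_sum]
    simp [mul_comm]
  have hci1 : ∀ i, CircleIntegrable (fun w => (w - a i)⁻¹ • w ^ j) 0 r := by
    intro i
    apply ContinuousOn.circleIntegrable hr.le
    refine ContinuousOn.fun_smul ?_ (by fun_prop)
    exact ContinuousOn.inv₀ (f := fun w : ℂ => w - a i) (by fun_prop) (fun w hw => hane w hw i)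
  have hdo : DifferentiableOn ℂ (fun w => w ^ j * (deriv g w / g w)) (Metric.closedBall 0 r) := by
    intro w hw
    have h1 : AnalyticAt ℂ (deriv g) w := (hg w hw).deriv
    have : AnalyticAt ℂ (fun w => w ^ j * (deriv g w / g w)) w :=
      (analyticAt_id.pow j).mul (h1.div (hg w hw) (hgn w hw))
    exact this.differentiableAt.differentiableWithinAt
  have hci2 : CircleIntegrable (fun w => w ^ j * (deriv g w / g w)) 0 r := by
    apply ContinuousOn.circleIntegrable hr.le
    exact hdo.continuousOn.mono Metric.sphere_subset_closedBall
  rw [circleIntegral.integral_congr hr.le hld, circleIntegral.integral_add _ hci2,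
    circleIntegral.integral_fun_sum]
  · have h0 : (∮ w in C(0, r), w ^ j * (deriv g w / g w)) = 0 := by
      have := (hdo.diffContOnCl_ball (subset_refl _)).circleIntegral_eq_zero hr.le
      exact this
    rw [h0, add_zero, Finset.mul_sum]
    refine Finset.sum_congr rfl fun i _ => ?_
    have hd : DifferentiableOn ℂ (fun w : ℂ => w ^ j) (Metric.closedBall 0 r) := by fun_prop
    have := hd.circleIntegral_sub_inv_smul (ha i)
    rw [this]; simp
  · intro i _; exact hci1 i
  · apply ContinuousOn.circleIntegrable hr.le
    apply continuousOn_finsetSum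
    intro i _
    refine ContinuousOn.fun_smul ?_ (by fun_prop)
    exact ContinuousOn.inv₀ (f := fun w : ℂ => w - a i) (by fun_prop) (fun w hw => hane w hw i)

/-- minimum modulus bound -/
lemma cx_minmod {r : ℝ} (hr : 0 < r) {g : ℂ → ℂ} {μ : ℝ} (hμ : 0 < μ)
    (hg : AnalyticOnNhd ℂ g (Metric.closedBall 0 r))
    (hgn : ∀ w ∈ Metric.closedBall 0 r, g w ≠ 0)
    (hb : ∀ w ∈ Metric.sphere (0 : ℂ) r, μ ≤ ‖g w‖) :
    ∀ w ∈ Metric.closedBall (0 : ℂ) r, μ ≤ ‖g w‖ := by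
  intro w hw
  have hdo : DifferentiableOn ℂ (fun w => (g w)⁻¹) (Metric.closedBall 0 r) := by
    intro w hw
    exact ((hg w hw).inv (hgn w hw)).differentiableAt.differentiableWithinAt
  have := Complex.norm_le_of_forall_mem_frontier_norm_le (U := Metric.ball (0 : ℂ) r)
    (C := μ⁻¹) (f := fun w => (g w)⁻¹) Metric.isBounded_ball (hdo.diffContOnCl_ball (subset_refl _))
    (by
      intro z hz
      rw [frontier_ball _ hr.ne'] at hz
      rw [norm_inv]
      exact inv_anti₀ hμ (hb z hz)) (z := w) (by rwa [closure_ball _ hr.ne'])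
  rw [norm_inv] at this
  exact (inv_le_inv₀ (norm_pos_iff.2 (hgn w hw)) hμ).1 this

/-- vanishing power sums -/
lemma cx_powersum {ι : Type} [Fintype ι] (b : ι → ℂ)
    (h : ∀ j ∈ Finset.Icc 1 (Fintype.card ι), ∑ i, b i ^ j = 0) : ∀ i, b i = 0 := by
  classical
  intro i0
  by_contra hi0
  let T : Finset ℂ := ((Finset.univ.image b).erase 0).erase (b i0)
  let P : Polynomial ℂ := Polynomial.X * ∏ v ∈ T, (Polynomial.X - Polynomial.C v)
  have hT : T.card + 1 ≤ Fintype.card ι := by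
    have h1 : b i0 ∈ (Finset.univ.image b).erase 0 :=
      Finset.mem_erase.2 ⟨hi0, Finset.mem_image_of_mem b (Finset.mem_univ _)⟩
    have h2 := Finset.card_erase_add_one h1
    have h3 : ((Finset.univ.image b).erase 0).card ≤ (Finset.univ.image b).card :=
      Finset.card_le_card (Finset.erase_subset _ _)
    have h4 := Finset.card_image_le (s := Finset.univ) (f := b)
    rw [Finset.card_univ] at h4
    show (((Finset.univ.image b).erase 0).erase (b i0)).card + 1 ≤ _
    omega
  have hdeg : P.natDegree ≤ Fintype.card ι := by
    have h1 : P.natDegree ≤ 1 + (∏ v ∈ T, (Polynomial.X - Polynomial.C v)).natDegree := by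
      refine Polynomial.natDegree_mul_le.trans ?_
      simp
    rw [Polynomial.natDegree_finsetProd_X_sub_C_eq_card] at h1
    omega
  have hsum : ∑ i, P.eval (b i) = 0 := by
    simp_rw [Polynomial.eval_eq_sum_range]
    rw [Finset.sum_comm]
    apply Finset.sum_eq_zero
    intro j hj
    rw [← Finset.mul_sum]
    by_cases hj0 : j = 0
    · subst hj0
      have : P.coeff 0 = 0 := by simp [P]
      simp [this]
    · rw [h j (by simp at hj ⊢; omega), mul_zero]
  have hval : ∀ i, P.eval (b i) = if b i = b i0 then P.eval (b i0) else 0 := by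
    intro i
    split_ifs with hi
    · rw [hi]
    · by_cases h0 : b i = 0
      · simp [P, h0]
      · have : b i ∈ T := by simp [T, hi, h0]
        simp only [P, Polynomial.eval_mul, Polynomial.eval_prod]
        rw [Finset.prod_eq_zero this (by simp), mul_zero]
  have hne : P.eval (b i0) ≠ 0 := by
    simp only [P, Polynomial.eval_mul, Polynomial.eval_prod, Polynomial.eval_X]
    refine mul_ne_zero hi0 (Finset.prod_ne_zero_iff.2 ?_)
    intro v hv
    simp [T] at hv
    simp [sub_eq_zero]
    exact fun h => hv.1 h.symm
  rw [Finset.sum_congr rfl fun i _ => hval i] at hsum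
  rw [← Finset.sum_filter, Finset.sum_const, nsmul_eq_mul] at hsum
  rcases mul_eq_zero.1 hsum with h1 | h1
  · have : i0 ∈ Finset.univ.filter (fun i => b i = b i0) := by simp
    have := Finset.card_pos.2 ⟨i0, this⟩
    simp only [Nat.cast_eq_zero] at h1
    omega
  · exact hne h1

lemma cx_int_pow {α R : ℝ} (hR : 0 < R) (h2 : α < 2) :
    (∫⁻ w in Metric.ball (0 : ℂ) R, ENNReal.ofReal (‖w‖ ^ (-α))) ≠ ⊤ := by
  have h : IntegrableOn (fun w : ℂ => ‖w‖ ^ (-α)) (Metric.ball 0 R) volume := by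
    refine integrableOn_ball_of_norm_le_rpow (C := 1) (α := α) (by simp) (by simpa using h2) ?_ ?_
    · filter_upwards with w
      rw [Real.norm_of_nonneg (by positivity), one_mul]
    · apply Measurable.aestronglyMeasurable
      fun_prop
  exact h.lintegral_lt_top.ne

lemma cx_int_pow_shift {e r : ℝ} {a : ℂ} (ha : a ∈ Metric.ball (0 : ℂ) r) :
    (∫⁻ w in Metric.ball (0 : ℂ) r, ENNReal.ofReal (‖w - a‖ ^ (-e))) ≤
      ∫⁻ w in Metric.ball (0 : ℂ) (2 * r), ENNReal.ofReal (‖w‖ ^ (-e)) := by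
  rw [← lintegral_indicator measurableSet_ball, ← lintegral_indicator measurableSet_ball]
  rw [← lintegral_sub_right_eq_self (fun w => Set.indicator (Metric.ball (0 : ℂ) (2 * r))
    (fun w => ENNReal.ofReal (‖w‖ ^ (-e))) w) a]
  apply lintegral_mono
  intro w
  apply Set.indicator_le
  intro x hx
  rw [Set.indicator_of_mem]
  simp at hx ha ⊢
  calc ‖x - a‖ ≤ ‖x‖ + ‖a‖ := norm_sub_le _ _
    _ < 2 * r := by linarith

lemma cx_prod_rpow {ι : Type} [Fintype ι] (x : ι → ℝ) (hx : ∀ l, 0 ≤ x l) (t : ι) {X s c : ℝ}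
    (hX : 0 < X) (hXt : X ≤ x t) (hs : 0 < s) (hsc : s ≤ 2 * c) :
    (∏ l, x l) ^ (-(2 * c)) ≤ X ^ (-s) * ∑ l, x l ^ (-(2 * c * Fintype.card ι - s)) := by
  classical
  by_cases h0 : ∃ l, x l = 0
  · obtain ⟨l, hl⟩ := h0
    rw [Finset.prod_eq_zero (Finset.mem_univ l) hl, Real.zero_rpow (by linarith)]
    apply mul_nonneg (by positivity)
    exact Finset.sum_nonneg fun i _ => Real.rpow_nonneg (hx i) _
  push Not at h0
  have hpos : ∀ l, 0 < x l := fun l => lt_of_le_of_ne (hx l) (Ne.symm (h0 l))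
  obtain ⟨μ, -, hμ⟩ := Finset.exists_min_image Finset.univ x ⟨t, Finset.mem_univ t⟩
  have hcard : ((Finset.univ.erase t).card : ℝ) = Fintype.card ι - 1 := by
    rw [Finset.card_erase_of_mem (Finset.mem_univ t), Finset.card_univ, Nat.cast_sub]
    · simp
    · exact Fintype.card_pos_iff.2 ⟨t⟩
  have key : (∏ l, x l) ^ (-(2 * c)) ≤ X ^ (-s) * x μ ^ (-(2 * c * Fintype.card ι - s)) := by
    rw [← Real.finsetProd_rpow _ _ (fun i _ => hx i),
      ← Finset.mul_prod_erase _ _ (Finset.mem_univ t)]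
    have e1 : x t ^ (-(2 * c)) = x t ^ (-s) * x t ^ (-(2 * c - s)) := by
      rw [← Real.rpow_add (hpos t)]; congr 1; ring
    have e2 : x μ ^ (-(2 * c * Fintype.card ι - s)) =
        x μ ^ (-(2 * c - s)) * ∏ l ∈ Finset.univ.erase t, x μ ^ (-(2 * c)) := by
      rw [Finset.prod_const, ← Real.rpow_natCast, ← Real.rpow_mul (hx μ),
        ← Real.rpow_add (hpos μ), hcard]
      congr 1; ring
    rw [e1, e2, mul_assoc]
    have h1 : x t ^ (-s) ≤ X ^ (-s) :=
      Real.rpow_le_rpow_of_nonpos hX hXt (by linarith)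
    have h2 : x t ^ (-(2 * c - s)) ≤ x μ ^ (-(2 * c - s)) :=
      Real.rpow_le_rpow_of_nonpos (hpos μ) (hμ t (Finset.mem_univ t)) (by linarith)
    have h3 : ∏ l ∈ Finset.univ.erase t, x l ^ (-(2 * c)) ≤
        ∏ l ∈ Finset.univ.erase t, x μ ^ (-(2 * c)) := by
      apply Finset.prod_le_prod
      · intro i _; exact Real.rpow_nonneg (hx i) _
      · intro i _
        exact Real.rpow_le_rpow_of_nonpos (hpos μ) (hμ i (Finset.mem_univ i)) (by linarith)
    have n1 : 0 ≤ ∏ l ∈ Finset.univ.erase t, x l ^ (-(2 * c)) :=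
      Finset.prod_nonneg fun i _ => Real.rpow_nonneg (hx i) _
    have n2 : 0 ≤ x t ^ (-(2 * c - s)) := Real.rpow_nonneg (hx t) _
    have n3 : 0 ≤ x μ ^ (-(2 * c - s)) := Real.rpow_nonneg (hx μ) _
    have n4 : 0 ≤ X ^ (-s) := Real.rpow_nonneg hX.le _
    gcongr
  refine key.trans ?_
  gcongr
  exact Finset.single_le_sum (f := fun l => x l ^ (-(2 * c * Fintype.card ι - s)))
    (fun i _ => Real.rpow_nonneg (hx i) _) (Finset.mem_univ μ)

/-- some root is far from `w` if a centred power sum is large -/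
lemma cx_far {ι : Type} [Fintype ι] [Nonempty ι] (a : ι → ℂ) (m w : ℂ)
    (hm : (Fintype.card ι : ℂ) * m = ∑ l, a l) (j : ℕ) (X : ℝ)
    (hq : Fintype.card ι * (2 * X) ^ j < ‖∑ l, (a l - m) ^ j‖) : ∃ t, X ≤ ‖w - a t‖ := by
  by_contra hcon
  push Not at hcon
  have hk : (0 : ℝ) < Fintype.card ι := by exact_mod_cast Fintype.card_pos
  have hwm : ‖w - m‖ ≤ X := by
    have h1 : (Fintype.card ι : ℂ) * (w - m) = ∑ l, (w - a l) := by
      rw [Finset.sum_sub_distrib, ← hm]; simp; ring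
    have h2 : ‖(Fintype.card ι : ℂ) * (w - m)‖ ≤ Fintype.card ι * X := by
      rw [h1]
      refine (norm_sum_le _ _).trans ?_
      refine (Finset.sum_le_card_nsmul _ _ X fun l _ => (hcon l).le).trans ?_
      simp
    rw [norm_mul, Complex.norm_natCast] at h2
    exact le_of_mul_le_mul_left h2 hk
  have : ‖∑ l, (a l - m) ^ j‖ ≤ Fintype.card ι * (2 * X) ^ j := by
    refine (norm_sum_le _ _).trans ?_
    refine (Finset.sum_le_card_nsmul _ _ ((2 * X) ^ j) fun l _ => ?_).trans ?_
    · rw [norm_pow]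
      gcongr
      calc ‖a l - m‖ = ‖(w - m) - (w - a l)‖ := by congr 1; ring
        _ ≤ ‖w - m‖ + ‖w - a l‖ := norm_sub_le _ _
        _ ≤ 2 * X := by linarith [hcon l]
    · simp
  linarith

lemma cx_integrableOn {f : ℂ × ℂ → ℂ} {ρ r : ℝ} (hρ : 0 < ρ) (hr : 0 < r) (k : ℕ)
    (hf : ContinuousOn f (Metric.ball 0 ρ ×ˢ Metric.ball 0 r)) {c α e A : ℝ} (hA : 0 ≤ A)
    (hα : α < 2) (he : e < 2)
    (hb : ∀ z ∈ Metric.ball (0 : ℂ) ρ, z ≠ 0 → ∃ (ι : Type) (_ : Fintype ι) (a : ι → ℂ),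
      Fintype.card ι = k ∧ (∀ l, a l ∈ Metric.ball (0 : ℂ) r) ∧
      ∀ w ∈ Metric.ball (0 : ℂ) r, ‖f (z, w)‖ ^ (-(2 * c)) ≤
        A * ‖z‖ ^ (-α) * ∑ l, ‖w - a l‖ ^ (-e)) :
    IntegrableOn (fun p => ‖f p‖ ^ (-(2 * c))) (Metric.ball 0 ρ ×ˢ Metric.ball 0 r) volume := by
  have hms : MeasurableSet (Metric.ball (0 : ℂ) ρ ×ˢ Metric.ball (0 : ℂ) r) :=
    measurableSet_ball.prod measurableSet_ball
  have hmeas : AEMeasurable (fun p => ‖f p‖ ^ (-(2 * c)))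
      (volume.restrict (Metric.ball (0 : ℂ) ρ ×ˢ Metric.ball (0 : ℂ) r)) := by
    have := (hf.aemeasurable (μ := volume) hms).norm
    exact this.pow_const _
  refine ⟨hmeas.aestronglyMeasurable, ?_⟩
  rw [hasFiniteIntegral_iff_ofReal (by filter_upwards with p; positivity)]
  rw [Measure.volume_eq_prod, ← Measure.prod_restrict] at hmeas ⊢
  rw [lintegral_prod _ hmeas.ennreal_ofReal]
  set J := ∫⁻ w in Metric.ball (0 : ℂ) (2 * r), ENNReal.ofReal (‖w‖ ^ (-e)) with hJ
  have hJt : J ≠ ⊤ := cx_int_pow (by linarith) he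
  have hbound : ∀ᵐ z ∂(volume.restrict (Metric.ball (0 : ℂ) ρ)),
      (∫⁻ w in Metric.ball (0 : ℂ) r, ENNReal.ofReal (‖f (z, w)‖ ^ (-(2 * c)))) ≤
      (ENNReal.ofReal A * (k * J)) * ENNReal.ofReal (‖z‖ ^ (-α)) := by
    have h0 : ∀ᵐ z ∂(volume.restrict (Metric.ball (0 : ℂ) ρ)), z ≠ 0 :=
      ae_restrict_of_ae (Measure.ae_ne volume 0)
    filter_upwards [ae_restrict_mem measurableSet_ball, h0] with z hz hz0
    obtain ⟨ι, hι, a, hcard, ha, hle⟩ := hb z hz hz0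
    calc (∫⁻ w in Metric.ball (0 : ℂ) r, ENNReal.ofReal (‖f (z, w)‖ ^ (-(2 * c))))
        ≤ ∫⁻ w in Metric.ball (0 : ℂ) r, (ENNReal.ofReal (A * ‖z‖ ^ (-α))) *
            ∑ l, ENNReal.ofReal (‖w - a l‖ ^ (-e)) := by
          apply setLIntegral_mono
          · fun_prop
          · intro w hw
            rw [← ENNReal.ofReal_sum_of_nonneg (fun _ _ => by positivity),
              ← ENNReal.ofReal_mul (by positivity)]
            exact ENNReal.ofReal_le_ofReal (hle w hw)
      _ = (ENNReal.ofReal (A * ‖z‖ ^ (-α))) *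
            ∑ l, ∫⁻ w in Metric.ball (0 : ℂ) r, ENNReal.ofReal (‖w - a l‖ ^ (-e)) := by
          rw [lintegral_const_mul _ (by fun_prop), lintegral_finsetSum _ (by intros; fun_prop)]
      _ ≤ (ENNReal.ofReal (A * ‖z‖ ^ (-α))) * ∑ l : ι, J := by
          gcongr with l
          exact cx_int_pow_shift (ha l)
      _ = _ := by
          rw [ENNReal.ofReal_mul hA, Finset.sum_const, Finset.card_univ, hcard, nsmul_eq_mul]
          ring
  refine (lintegral_mono_ae hbound).trans_lt ?_
  rw [lintegral_const_mul _ (by fun_prop)]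
  apply ENNReal.mul_lt_top
  · apply ENNReal.mul_lt_top ENNReal.ofReal_lt_top
    exact ENNReal.mul_lt_top (by simp) hJt.lt_top
  · exact (cx_int_pow hρ hα).lt_top

/-- Root data over a small disc. -/
lemma cx_roots {f : ℂ × ℂ → ℂ} (hf : AnalyticAt ℂ f 0) {k : ℕ} (hk : 1 ≤ k) {g0 : ℂ → ℂ}
    (hg0 : AnalyticAt ℂ g0 0) (hg00 : g0 0 ≠ 0)
    (hg0e : ∀ᶠ w in nhds (0 : ℂ), f (0, w) = w ^ k * g0 w) :
    ∃ (r ρ μ : ℝ) (P : ℕ → ℂ → ℂ), 0 < r ∧ 0 < ρ ∧ ρ ≤ 1 ∧ 0 < μ ∧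
      (∀ z ∈ Metric.ball (0 : ℂ) ρ, ∀ w ∈ Metric.closedBall (0 : ℂ) r, AnalyticAt ℂ f (z, w)) ∧
      (∀ z ∈ Metric.ball (0 : ℂ) ρ, ∀ w ∈ Metric.sphere (0 : ℂ) r, μ ≤ ‖f (z, w)‖) ∧
      (∀ j, AnalyticOnNhd ℂ (P j) (Metric.ball 0 ρ)) ∧
      ∀ z ∈ Metric.ball (0 : ℂ) ρ, ∃ (ι : Type) (_ : Fintype ι) (a : ι → ℂ) (g : ℂ → ℂ),
        Fintype.card ι = k ∧ (∀ i, a i ∈ Metric.ball 0 r) ∧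
        AnalyticOnNhd ℂ g (Metric.closedBall 0 r) ∧ (∀ w ∈ Metric.closedBall 0 r, g w ≠ 0) ∧
        (∀ w, f (z, w) = (∏ i, (w - a i)) * g w) ∧ ∀ j, P j z = ∑ i, a i ^ j := by
  classical
  have hS : ∀ᶠ w in nhds (0 : ℂ), AnalyticAt ℂ f (0, w) := by
    have h1 : ∀ᶠ p in nhds (0 : ℂ × ℂ), AnalyticAt ℂ f p := hf.eventually_analyticAt
    have h2 : Filter.Tendsto (fun w : ℂ => ((0 : ℂ), w)) (nhds 0) (nhds (0 : ℂ × ℂ)) := by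
      have : Continuous (fun w : ℂ => ((0 : ℂ), w)) := by fun_prop
      exact this.tendsto 0
    exact h2.eventually h1
  obtain ⟨ε, hε, hεb⟩ := Metric.eventually_nhds_iff_ball.1
    (hS.and (hg0e.and (hg0.eventually_analyticAt.and (hg0.continuousAt.eventually_ne hg00))))
  set r := ε / 2 with hrdef
  have hr : 0 < r := by positivity
  have hcb : Metric.closedBall (0 : ℂ) r ⊆ Metric.ball 0 ε :=
    Metric.closedBall_subset_ball (by linarith)
  have hsph : ∀ w ∈ Metric.sphere (0 : ℂ) r, f (0, w) ≠ 0 := by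
    intro w hw
    obtain ⟨-, h2, -, h4⟩ := hεb w (hcb (Metric.sphere_subset_closedBall hw))
    rw [h2]
    refine mul_ne_zero (pow_ne_zero _ ?_) h4
    rintro rfl
    simp at hw
    exact hr.ne hw
  -- lower bound on the sphere
  have hcont0 : ContinuousOn (fun w => ‖f (0, w)‖) (Metric.sphere (0 : ℂ) r) := by
    intro w hw
    have h1 := (hεb w (hcb (Metric.sphere_subset_closedBall hw))).1.continuousAt
    have h2 : ContinuousAt (fun w : ℂ => f (0, w)) w :=
      ContinuousAt.comp' (f := fun w : ℂ => ((0 : ℂ), w)) (g := f) h1 (by fun_prop)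
    exact h2.norm.continuousWithinAt
  obtain ⟨x0, hx0, hmin⟩ := (isCompact_sphere (0 : ℂ) r).exists_isMinOn
    ((NormedSpace.sphere_nonempty (x := (0 : ℂ))).2 hr.le) hcont0
  set μ := ‖f (0, x0)‖ / 2 with hμdef
  have hμ : 0 < μ := half_pos (norm_pos_iff.2 (hsph x0 hx0))
  have ev1 : ∀ᶠ z in nhds (0 : ℂ), ∀ w ∈ Metric.closedBall (0 : ℂ) r, AnalyticAt ℂ f (z, w) := by
    apply (isCompact_closedBall (0 : ℂ) r).eventually_forall_of_forall_eventually
    intro w hw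
    exact (hεb w (hcb hw)).1.eventually_analyticAt
  have ev2 : ∀ᶠ z in nhds (0 : ℂ), ∀ w ∈ Metric.sphere (0 : ℂ) r, μ ≤ ‖f (z, w)‖ := by
    apply (isCompact_sphere (0 : ℂ) r).eventually_forall_of_forall_eventually
    intro w hw
    have h1 := (hεb w (hcb (Metric.sphere_subset_closedBall hw))).1.continuousAt.norm
    have h2 : μ < ‖f (0, w)‖ := by
      have h3 : ‖f (0, x0)‖ ≤ ‖f (0, w)‖ := hmin hw
      have : μ < ‖f (0, x0)‖ := half_lt_self (norm_pos_iff.2 (hsph x0 hx0))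
      linarith
    filter_upwards [h1.eventually (lt_mem_nhds h2)] with p hp using hp.le
  obtain ⟨ρ1, hρ1, hρb⟩ := Metric.eventually_nhds_iff_ball.1 (ev1.and ev2)
  let fw : ℂ × ℂ → ℂ := fun p => fderiv ℂ f p (0, 1)
  let P : ℕ → ℂ → ℂ := fun j z => (2 * Real.pi * Complex.I : ℂ)⁻¹ *
    ∮ ζ in C(0, r), ζ ^ j * (fw (z, ζ) / f (z, ζ))
  have hpi : (2 * Real.pi * Complex.I : ℂ) ≠ 0 := Complex.two_pi_I_ne_zero
  have hana : ∀ j, ∀ z ∈ Metric.ball (0 : ℂ) ρ1, ∀ w ∈ Metric.sphere (0 : ℂ) r,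
      AnalyticAt ℂ (fun p : ℂ × ℂ => p.2 ^ j * (fw p / f p)) (z, w) := by
    intro j z hz w hw
    have h1 := (hρb z hz).1 w (Metric.sphere_subset_closedBall hw)
    have h2 : f (z, w) ≠ 0 := norm_pos_iff.1 (hμ.trans_le ((hρb z hz).2 w hw))
    have h3 : AnalyticAt ℂ fw (z, w) := by
      have := h1.fderiv
      exact ((ContinuousLinearMap.apply ℂ ℂ ((0 : ℂ), (1 : ℂ))).analyticAt _).fun_comp this
    exact (analyticAt_snd.pow j).mul (h3.div h1 h2)
  have hP : ∀ j, AnalyticOnNhd ℂ (P j) (Metric.ball 0 ρ1) := by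
    intro j z hz
    refine analyticAt_const.mul ?_
    refine cx_param_one (F := fun p : ℂ × ℂ => p.2 ^ j * (fw p / f p)) Metric.isOpen_ball hr.le
      ?_ ?_ z hz
    · rintro ⟨z, w⟩ ⟨hz, hw⟩
      exact (hana j z hz w hw).continuousAt.continuousWithinAt
    · intro w hw z hz
      have h1 := (hana j z hz w hw).differentiableAt
      have : DifferentiableAt ℂ ((fun p : ℂ × ℂ => p.2 ^ j * (fw p / f p)) ∘ fun z => (z, w)) z :=
        DifferentiableAt.comp (f := fun z : ℂ => (z, w)) z h1 (by fun_prop)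
      exact this.differentiableWithinAt
  have hderiv : ∀ z ∈ Metric.ball (0 : ℂ) ρ1, ∀ w ∈ Metric.sphere (0 : ℂ) r,
      deriv (fun w => f (z, w)) w = fw (z, w) := by
    intro z hz w hw
    have h1 := ((hρb z hz).1 w (Metric.sphere_subset_closedBall hw)).differentiableAt.hasFDerivAt
    have h2 : HasDerivAt (fun w : ℂ => (z, w)) ((0 : ℂ), (1 : ℂ)) w :=
      (hasDerivAt_const w z).prodMk (hasDerivAt_id w)
    exact (h1.comp_hasDerivAt w h2).deriv
  have hPsum : ∀ z ∈ Metric.ball (0 : ℂ) ρ1, ∀ (ι : Type) (_ : Fintype ι) (a : ι → ℂ) (g : ℂ → ℂ),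
      (∀ i, a i ∈ Metric.ball 0 r) →
      AnalyticOnNhd ℂ g (Metric.closedBall 0 r) → (∀ w ∈ Metric.closedBall 0 r, g w ≠ 0) →
      (∀ᶠ w in nhdsSet (Metric.closedBall (0 : ℂ) r), f (z, w) = (∏ i, (w - a i)) * g w) →
      ∀ j, P j z = ∑ i, a i ^ j := by
    intro z hz ι hι a g ha hg hgn he j
    have h1 := cx_logint hr ha hg hgn he j
    have h2 : (∮ ζ in C(0, r), ζ ^ j * (fw (z, ζ) / f (z, ζ))) =
        ∮ w in C(0, r), w ^ j * (deriv (fun w => f (z, w)) w / f (z, w)) := by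
      apply circleIntegral.integral_congr hr.le
      intro w hw
      simp only [hderiv z hz w hw]
    simp only [P]
    rw [h2, h1, inv_mul_cancel_left₀ hpi]
  have h0mem : (0 : ℂ) ∈ Metric.ball (0 : ℂ) ρ1 := Metric.mem_ball_self hρ1
  have hP00 : P 0 0 = k := by
    have := hPsum 0 h0mem (Fin k) inferInstance (fun _ => 0) g0 (by simp [hr])
      (fun w hw => (hεb w (hcb hw)).2.2.1) (fun w hw => (hεb w (hcb hw)).2.2.2) (by
        rw [eventually_nhdsSet_iff_exists]
        refine ⟨Metric.ball 0 ε, Metric.isOpen_ball, hcb, ?_⟩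
        intro w hw
        simpa using (hεb w hw).2.1) 0
    simpa using this
  have ev3 : ∀ᶠ z in nhds (0 : ℂ), ‖P 0 z - k‖ < 1 := by
    have h1 : ContinuousAt (fun z => ‖P 0 z - k‖) 0 :=
      ((hP 0 0 h0mem).continuousAt.sub continuousAt_const).norm
    refine h1.eventually (gt_mem_nhds ?_)
    simp [hP00]
  obtain ⟨ρ2, hρ2, hρ2b⟩ := Metric.eventually_nhds_iff_ball.1 ev3
  set ρ := min 1 (min ρ1 ρ2) with hρ
  have hs1 : Metric.ball (0 : ℂ) ρ ⊆ Metric.ball 0 ρ1 :=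
    Metric.ball_subset_ball ((min_le_right _ _).trans (min_le_left _ _))
  have hs2 : Metric.ball (0 : ℂ) ρ ⊆ Metric.ball 0 ρ2 :=
    Metric.ball_subset_ball ((min_le_right _ _).trans (min_le_right _ _))
  refine ⟨r, ρ, μ, P, hr, by positivity, min_le_left _ _, hμ, fun z hz => (hρb z (hs1 hz)).1,
    fun z hz => (hρb z (hs1 hz)).2, fun j => (hP j).mono hs1, ?_⟩
  intro z hz
  have hFz : AnalyticOnNhd ℂ (fun w => f (z, w)) (Metric.closedBall 0 r) := by
    intro w hw
    exact AnalyticAt.fun_comp (f := fun w : ℂ => (z, w)) ((hρb z (hs1 hz)).1 w hw)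
      (analyticAt_const.prod analyticAt_id)
  obtain ⟨ι, hι, a, g, ha, hg, hgn, hp⟩ := cx_factor hr hFz (fun w hw =>
    norm_pos_iff.1 (hμ.trans_le ((hρb z (hs1 hz)).2 w hw)))
  have hsum := hPsum z (hs1 hz) ι hι a g ha hg hgn (Filter.Eventually.of_forall hp)
  refine ⟨ι, hι, a, g, ?_, ha, hg, hgn, hp, hsum⟩
  have h1 := hρ2b z (hs2 hz)
  rw [hsum 0] at h1
  simp only [pow_zero, Finset.sum_const, Finset.card_univ, nsmul_eq_mul, mul_one] at h1
  have h2 : ‖(((Fintype.card ι : ℤ) - (k : ℤ) : ℤ) : ℂ)‖ < 1 := by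
    push_cast; exact h1
  rw [Complex.norm_intCast] at h2
  have h3 : |(Fintype.card ι : ℤ) - (k : ℤ)| < 1 := by exact_mod_cast h2
  rw [Int.abs_lt_one_iff] at h3
  omega

lemma cx_caseA {f : ℂ × ℂ → ℂ} {k : ℕ} (hk : 1 ≤ k) {r ρ : ℝ} (hr : 0 < r) (hρ : 0 < ρ)
    {m : ℂ → ℂ} (hm : AnalyticOnNhd ℂ m (Metric.ball 0 ρ)) (hf00 : f 0 = 0)
    (hfa : ∀ z ∈ Metric.ball (0 : ℂ) ρ, ∀ w ∈ Metric.closedBall (0 : ℂ) r, AnalyticAt ℂ f (z, w))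
    (hmr : ∀ z ∈ Metric.ball (0 : ℂ) ρ, m z ∈ Metric.ball (0 : ℂ) r)
    (H : ∀ z ∈ Metric.ball (0 : ℂ) ρ, ∃ g : ℂ → ℂ, AnalyticOnNhd ℂ g (Metric.closedBall 0 r) ∧
      (∀ w ∈ Metric.closedBall 0 r, g w ≠ 0) ∧ ∀ w, f (z, w) = (w - m z) ^ k * g w) :
    ∃ (V : Set (ℂ × ℂ)) (g h : ℂ × ℂ → ℂ),
      IsOpen V ∧ (0 : ℂ × ℂ) ∈ V ∧
      DifferentiableOn ℂ g V ∧ DifferentiableOn ℂ h V ∧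
      g 0 ≠ 0 ∧ h 0 = 0 ∧ fderiv ℂ h 0 ≠ 0 ∧
      ∀ z ∈ V, f z = g z * h z ^ k := by
  have h0ρ : (0 : ℂ) ∈ Metric.ball (0 : ℂ) ρ := Metric.mem_ball_self hρ
  have h0r : (0 : ℂ) ∈ Metric.ball (0 : ℂ) r := Metric.mem_ball_self hr
  have hm0 : m 0 = 0 := by
    obtain ⟨g, -, hg, hfg⟩ := H 0 h0ρ
    have h1 : f (0, 0) = 0 := hf00
    rw [hfg 0, mul_eq_zero] at h1
    rcases h1 with h1 | h1
    · have := pow_eq_zero_iff (by omega) |>.1 h1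
      simpa using this
    · exact absurd h1 (hg 0 (Metric.ball_subset_closedBall h0r))
  have hne : ∀ z ∈ Metric.ball (0 : ℂ) ρ, ∀ ζ ∈ Metric.sphere (0 : ℂ) r, ζ - m z ≠ 0 := by
    intro z hz ζ hζ h
    have h1 := hmr z hz
    rw [← sub_eq_zero.1 h] at h1
    simp at h1 hζ
    linarith
  set F : ℂ × ℂ → ℂ := fun q => f q / (q.2 - m q.1) ^ k with hF
  have hFa : ∀ z ∈ Metric.ball (0 : ℂ) ρ, ∀ ζ ∈ Metric.sphere (0 : ℂ) r,
      AnalyticAt ℂ F (z, ζ) := by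
    intro z hz ζ hζ
    have h1 : AnalyticAt ℂ (fun q : ℂ × ℂ => m q.1) (z, ζ) :=
      AnalyticAt.fun_comp (g := m) (f := fun q : ℂ × ℂ => q.1) (hm z hz) analyticAt_fst
    exact (hfa z hz ζ (Metric.sphere_subset_closedBall hζ)).div
      ((analyticAt_snd.sub h1).pow k) (pow_ne_zero _ (hne z hz ζ hζ))
  have hGa := cx_param_two (W := Metric.ball (0 : ℂ) ρ) Metric.isOpen_ball hr.le (F := F)
    (fun p hp => (hFa p.1 hp.1 p.2 hp.2).continuousAt.continuousWithinAt)
    (fun ζ hζ z hz => by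
      have h1 := (hFa z hz ζ hζ).differentiableAt
      have h2 : DifferentiableAt ℂ (fun z : ℂ => F (z, ζ)) z :=
        DifferentiableAt.fun_comp' (f := fun z : ℂ => (z, ζ)) (g := F) z h1 (by fun_prop)
      exact h2.differentiableWithinAt)
  have hGeq : ∀ z ∈ Metric.ball (0 : ℂ) ρ, ∀ w ∈ Metric.ball (0 : ℂ) r, ∀ g : ℂ → ℂ,
      AnalyticOnNhd ℂ g (Metric.closedBall 0 r) → (∀ w, f (z, w) = (w - m z) ^ k * g w) →
      (2 * Real.pi * Complex.I : ℂ)⁻¹ • (∮ ζ in C(0, r), (ζ - w)⁻¹ • F (z, ζ)) = g w := by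
    intro z hz w hw g hg hfg
    have h1 : (∮ ζ in C(0, r), (ζ - w)⁻¹ • F (z, ζ)) = ∮ ζ in C(0, r), (ζ - w)⁻¹ • g ζ := by
      apply circleIntegral.integral_congr hr.le
      intro ζ hζ
      have h2 := pow_ne_zero k (hne z hz ζ hζ)
      simp only [hF, hfg]
      rw [mul_div_cancel_left₀ _ h2]
    rw [h1]
    have hd : DifferentiableOn ℂ g (closure (Metric.ball 0 r)) := by
      rw [closure_ball _ hr.ne']
      exact hg.differentiableOn
    exact DiffContOnCl.two_pi_i_inv_smul_circleIntegral_sub_inv_smul hd.diffContOnCl hw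
  set G : ℂ × ℂ → ℂ := fun p => (2 * Real.pi * Complex.I : ℂ)⁻¹ •
    (∮ ζ in C(0, r), (ζ - p.2)⁻¹ • F (p.1, ζ)) with hG
  have hhd : ∀ p ∈ Metric.ball (0 : ℂ) ρ ×ˢ Metric.ball (0 : ℂ) r,
      DifferentiableAt ℂ (fun p : ℂ × ℂ => p.2 - m p.1) p := by
    intro p hp
    have h1 : DifferentiableAt ℂ (fun q : ℂ × ℂ => m q.1) p :=
      DifferentiableAt.fun_comp' (f := fun q : ℂ × ℂ => q.1) (g := m) p
        (hm p.1 hp.1).differentiableAt differentiableAt_fst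
    exact differentiableAt_snd.sub h1
  refine ⟨Metric.ball 0 ρ ×ˢ Metric.ball 0 r, G, fun p => p.2 - m p.1,
    Metric.isOpen_ball.prod Metric.isOpen_ball, ⟨h0ρ, h0r⟩, ?_,
    fun p hp => (hhd p hp).differentiableWithinAt, ?_, by simp [hm0], ?_, ?_⟩
  · exact DifferentiableOn.const_smul hGa.differentiableOn (2 * Real.pi * Complex.I : ℂ)⁻¹
  · obtain ⟨g, hg1, hg2, hg3⟩ := H 0 h0ρ
    have := hGeq 0 h0ρ 0 h0r g hg1 hg3
    have h2 : G 0 = g 0 := this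
    rw [h2]
    exact hg2 0 (Metric.ball_subset_closedBall h0r)
  · intro h
    have h1 := (hhd 0 ⟨h0ρ, h0r⟩).hasFDerivAt
    rw [h] at h1
    have h3 : HasFDerivAt (fun w : ℂ => ((0 : ℂ), w)) (ContinuousLinearMap.inr ℂ ℂ ℂ) 0 :=
      (ContinuousLinearMap.inr ℂ ℂ ℂ).hasFDerivAt
    have h2 := HasFDerivAt.comp (g := fun p : ℂ × ℂ => p.2 - m p.1) (0 : ℂ) h1 h3
    have h4 : HasFDerivAt (fun w : ℂ => w) (0 : ℂ →L[ℂ] ℂ) 0 := by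
      have h5 : ((fun p : ℂ × ℂ => p.2 - m p.1) ∘ fun w : ℂ => ((0 : ℂ), w)) = fun w => w := by
        ext w; simp [hm0]
      rw [h5] at h2
      simpa using h2
    have h5 := h4.unique (hasFDerivAt_id (0 : ℂ))
    have := congrArg (fun L : ℂ →L[ℂ] ℂ => L 1) h5
    simp at this
  · rintro ⟨z, w⟩ ⟨hz, hw⟩
    obtain ⟨g, hg1, hg2, hg3⟩ := H z hz
    have := hGeq z hz w hw g hg1 hg3
    have h2 : G (z, w) = g w := this
    simp only [h2]
    rw [hg3]; ring

/-- Dichotomy in normalized coordinates. -/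
lemma cx_main {f : ℂ × ℂ → ℂ} (hf : AnalyticAt ℂ f 0) {k : ℕ} (hk : 1 ≤ k) {g0 : ℂ → ℂ}
    (hg0 : AnalyticAt ℂ g0 0) (hg00 : g0 0 ≠ 0)
    (hg0e : ∀ᶠ w in nhds (0 : ℂ), f (0, w) = w ^ k * g0 w) :
    (∃ (V : Set (ℂ × ℂ)) (g h : ℂ × ℂ → ℂ),
      IsOpen V ∧ (0 : ℂ × ℂ) ∈ V ∧
      DifferentiableOn ℂ g V ∧ DifferentiableOn ℂ h V ∧
      g 0 ≠ 0 ∧ h 0 = 0 ∧ fderiv ℂ h 0 ≠ 0 ∧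
      ∀ z ∈ V, f z = g z * h z ^ k) ∨
    (∃ c : ℝ, 1 / (k : ℝ) < c ∧ ∃ V : Set (ℂ × ℂ), IsOpen V ∧ (0 : ℂ × ℂ) ∈ V ∧
      IntegrableOn (fun z => ‖f z‖ ^ (-(2 * c))) V volume) := by
  classical
  obtain ⟨r, ρ, μ, P, hr, hρ, hρ1, hμ, hfa, hfμ, hP, H⟩ := cx_roots hf hk hg0 hg00 hg0e
  have hf00 : f 0 = 0 := by
    have h1 : f (0, 0) = 0 ^ k * g0 0 := hg0e.self_of_nhds
    rw [zero_pow (by omega), zero_mul] at h1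
    exact h1
  have hk0 : (k : ℂ) ≠ 0 := by exact_mod_cast (by omega : k ≠ 0)
  set m : ℂ → ℂ := fun z => P 1 z / k with hmdef
  have hma : AnalyticOnNhd ℂ m (Metric.ball 0 ρ) := fun z hz => (hP 1 z hz).div_const
  set Q : ℕ → ℂ → ℂ := fun j z =>
    ∑ i ∈ Finset.range (j + 1), P i z * (-m z) ^ (j - i) * (j.choose i : ℂ) with hQdef
  have hQa : ∀ j, AnalyticOnNhd ℂ (Q j) (Metric.ball 0 ρ) := by
    intro j z hz
    apply Finset.analyticAt_fun_sum
    intro i _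
    exact ((hP i z hz).mul ((hma z hz).neg.pow _)).mul analyticAt_const
  have hQe : ∀ z (ι : Type) [Fintype ι] (a : ι → ℂ), (∀ j, P j z = ∑ i, a i ^ j) →
      ∀ j, ∑ i, (a i - m z) ^ j = Q j z := by
    intro z ι _ a ha j
    simp only [hQdef, ha, sub_eq_add_neg, add_pow, Finset.sum_mul]
    rw [Finset.sum_comm]
  have h0ρ : (0 : ℂ) ∈ Metric.ball (0 : ℂ) ρ := Metric.mem_ball_self hρ
  by_cases hA : ∀ j ∈ Finset.Icc 1 k, ∀ᶠ z in nhds (0 : ℂ), Q j z = 0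
  · left
    have hA2 : ∀ᶠ z in nhds (0 : ℂ), ∀ j ∈ Finset.Icc 1 k, Q j z = 0 :=
      (Filter.eventually_all_finset _).2 hA
    obtain ⟨ε, hε, hεb⟩ := Metric.eventually_nhds_iff_ball.1 hA2
    have hsub : Metric.ball (0 : ℂ) (min ε ρ) ⊆ Metric.ball 0 ρ :=
      Metric.ball_subset_ball (min_le_right _ _)
    have hroot : ∀ z ∈ Metric.ball (0 : ℂ) (min ε ρ), m z ∈ Metric.ball (0 : ℂ) r ∧
        ∃ g : ℂ → ℂ, AnalyticOnNhd ℂ g (Metric.closedBall 0 r) ∧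
      (∀ w ∈ Metric.closedBall 0 r, g w ≠ 0) ∧ ∀ w, f (z, w) = (w - m z) ^ k * g w := by
      intro z hz
      obtain ⟨ι, _, a, g, hc, ha, hg1, hg2, hg3, hPz⟩ := H z (hsub hz)
      have h1 : ∀ i, a i - m z = 0 := by
        apply cx_powersum
        intro j hj
        rw [hc] at hj
        rw [hQe z ι a hPz j]
        exact hεb z (Metric.ball_subset_ball (min_le_left _ _) hz) j hj
      have h2 : ∀ i, a i = m z := fun i => sub_eq_zero.1 (h1 i)
      have : Nonempty ι := Fintype.card_pos_iff.1 (by omega)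
      refine ⟨?_, g, hg1, hg2, ?_⟩
      · rw [← h2 (Classical.arbitrary ι)]; exact ha _
      · intro w
        rw [hg3]
        simp [h2, hc]
    exact cx_caseA hk hr (lt_min hε hρ) (hma.mono hsub) hf00 (fun z hz => hfa z (hsub hz))
      (fun z hz => (hroot z hz).1) (fun z hz => (hroot z hz).2)
  · right
    push Not at hA
    obtain ⟨j, hj, hjQ⟩ := hA
    have hjQ' : ¬ ∀ᶠ z in nhds (0 : ℂ), Q j z = 0 := by
      simpa using hjQ
    obtain ⟨N, q, hq, hq0, hqe⟩ :=
      (hQa j 0 h0ρ).exists_eventuallyEq_pow_smul_nonzero_iff.2 hjQ'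
    have hq1 : ∀ᶠ z in nhds (0 : ℂ), ‖q 0‖ / 2 < ‖q z‖ :=
      hq.continuousAt.norm.eventually_const_lt (half_lt_self (norm_pos_iff.2 hq0))
    obtain ⟨ε, hε, hεb⟩ := Metric.eventually_nhds_iff_ball.1 (hqe.and hq1)
    set κ := ‖q 0‖ / 2 with hκdef
    have hκ : 0 < κ := half_pos (norm_pos_iff.2 hq0)
    set ρ2 := min ε ρ with hρ2
    have hρ2p : 0 < ρ2 := lt_min hε hρ
    have hsub : Metric.ball (0 : ℂ) ρ2 ⊆ Metric.ball 0 ρ :=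
      Metric.ball_subset_ball (min_le_right _ _)
    have hQlow : ∀ z ∈ Metric.ball (0 : ℂ) ρ2, κ * ‖z‖ ^ N ≤ ‖Q j z‖ := by
      intro z hz
      obtain ⟨h1, h2⟩ := hεb z (Metric.ball_subset_ball (min_le_left _ _) hz)
      rw [h1]
      simp only [sub_zero, smul_eq_mul, norm_mul, norm_pow]
      rw [mul_comm]
      gcongr
    have hkR : (1 : ℝ) ≤ k := by exact_mod_cast hk
    have hj1 : 1 ≤ j := (Finset.mem_Icc.1 hj).1
    set κ' := min 1 (κ / (k * 2 ^ j)) / 2 with hκ'def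
    have hκ'p : 0 < κ' := by positivity
    have hκ'1 : κ' ≤ 1 := by
      have := min_le_left 1 (κ / (k * 2 ^ j)); rw [hκ'def]; linarith
    have hκ'2 : κ' * (k * 2 ^ j) < κ := by
      have h1 := min_le_right 1 (κ / (k * 2 ^ j))
      have h2 : 0 < κ / (k * 2 ^ j) := by positivity
      have h3 : κ' < κ / (k * 2 ^ j) := by rw [hκ'def]; linarith
      rwa [lt_div_iff₀ (by positivity)] at h3
    set s : ℝ := 1 / (N + k) with hsdef
    have hNk : (1 : ℝ) ≤ N + k := by
      have : (0 : ℝ) ≤ N := Nat.cast_nonneg _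
      linarith
    have hs : 0 < s := by positivity
    have hs1 : s * (N + k) = 1 := by rw [hsdef]; field_simp
    set c : ℝ := 1 / k + s / (4 * k) with hcdef
    have hck : c * k = 1 + s / 4 := by rw [hcdef]; field_simp
    have hsk : s * k ≤ 1 := by
      have : 0 ≤ s * N := by positivity
      linarith
    have hsN : s * N ≤ 1 := by
      have : 0 ≤ s * k := by positivity
      linarith
    have hsc : s ≤ 2 * c := by
      by_contra hcon
      push Not at hcon
      have : 2 * c * k < s * k := by
        apply mul_lt_mul_of_pos_right hcon (by linarith)
      nlinarith
    set ν := μ / (2 * r) ^ k with hνdef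
    have hν : 0 < ν := by positivity
    refine ⟨c, ?_, Metric.ball 0 ρ2 ×ˢ Metric.ball 0 r,
      Metric.isOpen_ball.prod Metric.isOpen_ball,
      ⟨Metric.mem_ball_self hρ2p, Metric.mem_ball_self hr⟩, ?_⟩
    · rw [hcdef]
      have : 0 < s / (4 * k) := by positivity
      linarith
    refine cx_integrableOn (α := N * s) (e := 2 * c * k - s)
      (A := ν ^ (-(2 * c)) * κ' ^ (-s)) hρ2p hr k ?_ ?_ ?_ ?_ ?_
    · intro p hp
      exact (hfa p.1 (hsub hp.1) p.2
        (Metric.ball_subset_closedBall hp.2)).continuousAt.continuousWithinAt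
    · positivity
    · linarith
    · nlinarith
    intro z hz hz0
    obtain ⟨ι, _, a, g, hc, ha, hg1, hg2, hg3, hPz⟩ := H z (hsub hz)
    refine ⟨ι, inferInstance, a, hc, ha, ?_⟩
    intro w hw
    have : Nonempty ι := Fintype.card_pos_iff.1 (by omega)
    have hzp : 0 < ‖z‖ := norm_pos_iff.2 hz0
    have hz1 : ‖z‖ < 1 := by
      have := hsub hz
      simp at this
      linarith
    have hgν : ∀ w ∈ Metric.closedBall (0 : ℂ) r, ν ≤ ‖g w‖ := by
      apply cx_minmod hr hν hg1 hg2
      intro w hw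
      have h1 := hfμ z (hsub hz) w hw
      rw [hg3, norm_mul, norm_prod] at h1
      have h2 : ∏ i, ‖w - a i‖ ≤ (2 * r) ^ k := by
        rw [← hc, ← Finset.card_univ, ← Finset.prod_const]
        apply Finset.prod_le_prod (fun i _ => norm_nonneg _)
        intro i _
        have h3 := ha i
        have h4 := norm_sub_le w (a i)
        simp at h3 hw
        linarith
      rw [hνdef, div_le_iff₀ (by positivity)]
      calc μ ≤ _ := h1
        _ ≤ (2 * r) ^ k * ‖g w‖ := by gcongr
        _ = _ := mul_comm _ _
    set X := κ' * ‖z‖ ^ N with hXdef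
    have hX : 0 < X := by positivity
    have hX1 : X ≤ 1 := by
      calc X ≤ 1 * 1 := by
            rw [hXdef]; gcongr; exact pow_le_one₀ hzp.le hz1.le
        _ = 1 := one_mul 1
    obtain ⟨t, ht⟩ := cx_far a (m z) w (by
        have := hPz 1
        simp only [pow_one] at this
        rw [← this, hc, hmdef]
        field_simp) j X (by
        rw [hQe z ι a hPz j, hc]
        refine lt_of_lt_of_le ?_ (hQlow z hz)
        calc (k : ℝ) * (2 * X) ^ j = k * 2 ^ j * X ^ j := by rw [mul_pow]; ring
          _ ≤ k * 2 ^ j * X := by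
              gcongr
              exact pow_le_of_le_one hX.le hX1 (by omega)
          _ = κ' * (k * 2 ^ j) * ‖z‖ ^ N := by rw [hXdef]; ring
          _ < κ * ‖z‖ ^ N := by gcongr)
    have hmain := cx_prod_rpow (fun l => ‖w - a l‖) (fun l => norm_nonneg _) t hX ht hs hsc
    rw [hc] at hmain
    have hXs : X ^ (-s) = κ' ^ (-s) * ‖z‖ ^ (-(N * s)) := by
      rw [hXdef, Real.mul_rpow hκ'p.le (by positivity), ← Real.rpow_natCast,
        ← Real.rpow_mul hzp.le]
      congr 2; ring
    have hc0 : 0 < c := by positivity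
    calc ‖f (z, w)‖ ^ (-(2 * c))
        = ‖g w‖ ^ (-(2 * c)) * (∏ l, ‖w - a l‖) ^ (-(2 * c)) := by
          rw [hg3, norm_mul, norm_prod, Real.mul_rpow
            (Finset.prod_nonneg fun i _ => norm_nonneg _) (norm_nonneg _), mul_comm]
      _ ≤ ν ^ (-(2 * c)) * (X ^ (-s) * ∑ l, ‖w - a l‖ ^ (-(2 * c * k - s))) := by
          apply mul_le_mul _ hmain (by positivity) (by positivity)
          exact Real.rpow_le_rpow_of_nonpos hν
            (hgν w (Metric.ball_subset_closedBall hw)) (by linarith)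
      _ = _ := by rw [hXs]; ring

/-- A direction along which the order is exactly `k`. -/
lemma cx_direction {f : ℂ × ℂ → ℂ} (hf : AnalyticAt ℂ f 0) {k : ℕ}
    (horder_lt : ∀ j < k, iteratedFDeriv ℂ j f 0 = 0)
    (horder_ne : iteratedFDeriv ℂ k f 0 ≠ 0) :
    ∃ v : ℂ × ℂ, (k ≠ 0 → v ≠ 0) ∧ ∃ g0 : ℂ → ℂ, AnalyticAt ℂ g0 0 ∧ g0 0 ≠ 0 ∧
      ∀ᶠ w in nhds (0 : ℂ), f (w • v) = w ^ k * g0 w := by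
  obtain ⟨p, R, hp⟩ := hf
  have hv : ∃ v : ℂ × ℂ, p k (fun _ => v) ≠ 0 := by
    by_contra hcon
    push Not at hcon
    apply horder_ne
    ext u
    have h1 := (p k).iteratedFDeriv_comp_diagonal 0 u
    have h2 : (fun x : ℂ × ℂ => p k (fun _ => x)) = fun _ => 0 := funext hcon
    rw [hp.iteratedFDeriv_eq_sum_of_completeSpace, ← h1, h2]
    have h3 : iteratedFDeriv ℂ k (fun _ : ℂ × ℂ => (0 : ℂ)) = 0 := iteratedFDeriv_fun_zero
    rw [h3]
    simp
  obtain ⟨v, hv⟩ := hv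
  refine ⟨v, ?_, ?_⟩
  · rintro hk rfl
    have : Nonempty (Fin k) := ⟨⟨0, Nat.pos_of_ne_zero hk⟩⟩
    exact hv ((p k).map_zero)
  set ℓ : ℂ →L[ℂ] ℂ × ℂ := ContinuousLinearMap.toSpanSingleton ℂ v with hℓ
  have hp2 : HasFPowerSeriesOnBall f p (ℓ 0) R := by simpa using hp
  have hq := hp2.compContinuousLinearMap
  have hit : ∀ n, iteratedDeriv n (f ∘ ℓ) 0 = n.factorial • p n (fun _ => v) := by
    intro n
    rw [iteratedDeriv_eq_iteratedFDeriv, ← hq.factorial_smul 1 n,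
      FormalMultilinearSeries.compContinuousLinearMap_apply]
    congr 2
    ext i <;> simp [hℓ]
  have han : AnalyticAt ℂ (f ∘ ℓ) 0 := hq.analyticAt
  have hord : analyticOrderAt (f ∘ ℓ) 0 = k := by
    rw [analyticOrderAt_eq_nat_iff_iteratedDeriv_eq_zero han]
    constructor
    · intro j hj
      rw [hit, hp.factorial_smul v j, horder_lt j hj]
      simp
    · rw [hit]
      exact smul_ne_zero (Nat.factorial_ne_zero k) hv
  obtain ⟨g, h1, h2, h3⟩ := han.analyticOrderAt_eq_natCast.1 hord
  refine ⟨g, h1, h2, h3.mono fun w hw => ?_⟩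
  simpa [hℓ] using hw

/-- Transfer of integrability through a linear equivalence. -/
lemma cx_transfer {F : ℂ × ℂ → ℝ} (L : (ℂ × ℂ) ≃L[ℂ] (ℂ × ℂ)) {V : Set (ℂ × ℂ)} (hV : IsOpen V)
    (h : IntegrableOn (fun z => F (L z)) V volume) : IntegrableOn F (L '' V) volume := by
  have hm : ∀ x ∈ V, HasFDerivWithinAt (fun z => L z)
      ((L : (ℂ × ℂ) →L[ℂ] (ℂ × ℂ)).restrictScalars ℝ) V x := fun x _ =>
    (((L : (ℂ × ℂ) →L[ℂ] (ℂ × ℂ)).restrictScalars ℝ).hasFDerivAt).hasFDerivWithinAt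
  have hvol : (volume : Measure (ℂ × ℂ)).IsAddHaarMeasure := by
    change ((volume : Measure ℂ).prod (volume : Measure ℂ)).IsAddHaarMeasure
    infer_instance
  refine (integrableOn_image_iff_integrableOn_abs_det_fderiv_smul volume
    hV.measurableSet hm L.injective.injOn F).2 ?_
  exact Integrable.const_mul h _

/-- Equality case of Lemma 4.3: if `f` is holomorphic near `0 ∈ ℂ²`, not identically
zero near `0`, with vanishing order `k ≥ 1` at `0`, and its complex singularity
exponent at `0` equals `1/k` (i.e. for every `c > 1/k` the function `‖f‖ ^ (-2c)`
fails to be integrable on every open neighborhood of `0`), then locally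
`f = g * h ^ k` with `g` holomorphic nonvanishing at `0` and `h` holomorphic of
vanishing order exactly `1` at `0`. -/
theorem factorization_of_extremal_singularity
    (f : ℂ × ℂ → ℂ) (U : Set (ℂ × ℂ)) (hU : IsOpen U) (h0U : (0 : ℂ × ℂ) ∈ U)
    (hf : DifferentiableOn ℂ f U)
    (hnz : ¬ ∀ᶠ z in nhds (0 : ℂ × ℂ), f z = 0)
    (k : ℕ) (hk : 1 ≤ k)
    (horder_lt : ∀ j < k, iteratedFDeriv ℂ j f 0 = 0)
    (horder_ne : iteratedFDeriv ℂ k f 0 ≠ 0)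
    (hext : ∀ c : ℝ, 1 / (k : ℝ) < c →
      ∀ V : Set (ℂ × ℂ), IsOpen V → (0 : ℂ × ℂ) ∈ V →
        ¬ IntegrableOn (fun z => ‖f z‖ ^ (-(2 * c))) V volume) :
    ∃ (V : Set (ℂ × ℂ)) (g h : ℂ × ℂ → ℂ),
      IsOpen V ∧ (0 : ℂ × ℂ) ∈ V ∧
      DifferentiableOn ℂ g V ∧ DifferentiableOn ℂ h V ∧
      g 0 ≠ 0 ∧ h 0 = 0 ∧ iteratedFDeriv ℂ 1 h 0 ≠ 0 ∧
      ∀ z ∈ V, f z = g z * h z ^ k := by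
  have hfa := cx_osgood hU h0U hf
  obtain ⟨v, hv, g0, hg0, hg00, hg0e⟩ := cx_direction hfa horder_lt horder_ne
  have hv0 : v ≠ 0 := hv (by omega)
  obtain ⟨L, hL⟩ := SeparatingDual.exists_continuousLinearEquiv_apply_eq (R := ℂ)
    (x := ((0 : ℂ), (1 : ℂ))) (y := v) (by simp) hv0
  have hfL : AnalyticAt ℂ (fun z => f (L z)) 0 := by
    have h1 : AnalyticAt ℂ f (L 0) := by simpa using hfa
    exact AnalyticAt.fun_comp (g := f) (f := fun z => L z) h1
      ((L : (ℂ × ℂ) →L[ℂ] (ℂ × ℂ)).analyticAt 0)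
  have he : ∀ᶠ w in nhds (0 : ℂ), f (L (0, w)) = w ^ k * g0 w := by
    refine hg0e.mono fun w hw => ?_
    have h1 : ((0 : ℂ), w) = w • ((0 : ℂ), (1 : ℂ)) := by simp
    rw [h1, map_smul, hL, hw]
  rcases cx_main hfL hk hg0 hg00 he with ⟨V, g, h, hV, h0V, hg, hh, hg0', hh0, hhd, hfac⟩ |
    ⟨c, hc, V, hV, h0V, hInteg⟩
  · have hpre : IsOpen (L.symm ⁻¹' V) := hV.preimage L.symm.continuous
    have hmaps : Set.MapsTo L.symm (L.symm ⁻¹' V) V := fun _ hx => hx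
    refine ⟨L.symm ⁻¹' V, fun z => g (L.symm z), fun z => h (L.symm z), hpre, by simpa using h0V,
      hg.comp L.symm.differentiable.differentiableOn hmaps,
      hh.comp L.symm.differentiable.differentiableOn hmaps, by simpa using hg0',
      by simpa using hh0, ?_, ?_⟩
    · intro hcon
      apply hhd
      have h1 : fderiv ℂ (fun z => h (L.symm z)) 0 = 0 := by
        refine ContinuousLinearMap.ext fun u => ?_
        have h2 := congrArg (fun T => T (fun _ => u)) hcon
        simpa [iteratedFDeriv_one_apply] using h2
      have h3 : fderiv ℂ (h ∘ L.symm) 0 = (fderiv ℂ h (L.symm 0)).comp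
          (L.symm : (ℂ × ℂ) →L[ℂ] (ℂ × ℂ)) := L.symm.comp_right_fderiv
      have h4 : fderiv ℂ (h ∘ L.symm) 0 = 0 := h1
      rw [h4, map_zero] at h3
      refine ContinuousLinearMap.ext fun u => ?_
      have h5 := congrArg (fun T : (ℂ × ℂ) →L[ℂ] ℂ => T (L u)) h3
      simpa using h5.symm
    · intro z hz
      have := hfac (L.symm z) hz
      simpa using this
  · exfalso
    refine hext c hc (L '' V) (L.toHomeomorph.isOpenMap V hV) ⟨0, h0V, by simp⟩ ?_
    exact cx_transfer (F := fun z => ‖f z‖ ^ (-(2 * c))) L hV hInteg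
end

section
/- Let k ≥ 1 be an integer and let h be a holomorphic function on an open neighborhood of 0 in ℂ² with vanishing order exactly k at 0, such that neither coordinate function z₁ nor z₂ divides h in the ring of germs of holomorphic functions at 0 (equivalently, neither h(0, ·) nor h(·, 0) is identically zero near 0). Define f(z₁, z₂) = z₁^{2k} · z₂^{k} · h(z₁, z₂). Then the complex singularity exponent of f at 0 is strictly greater than 1/(3k): there exists a real number c > 1/(3k) such that z ↦ |f(z)|^{-2c} is integrable on some open neighborhood of 0 with respect to Lebesgue measure on ℂ² ≅ ℝ⁴. (Lemma 5.2.) -/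
open MeasureTheory

/-- Cauchy estimate for the Fréchet derivative. -/
lemma SE_norm_fderiv_le {h : ℂ × ℂ → ℂ} {z : ℂ × ℂ} {ρ M : ℝ} (hρ : 0 < ρ)
    (hd : ∀ y ∈ Metric.closedBall z ρ, DifferentiableAt ℂ h y)
    (hM : ∀ y ∈ Metric.closedBall z ρ, ‖h y‖ ≤ M) : ‖fderiv ℂ h z‖ ≤ M / ρ := by
  have hM0 : 0 ≤ M := (norm_nonneg _).trans (hM z (Metric.mem_closedBall_self hρ.le))
  refine ContinuousLinearMap.opNorm_le_of_unit_norm (𝕜 := ℂ) (by positivity) ?_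
  intro v hv
  have hmem : ∀ t ∈ Metric.closedBall (0 : ℂ) ρ, z + t • v ∈ Metric.closedBall z ρ := by
    intro t ht
    simp only [Metric.mem_closedBall, dist_zero_right] at ht
    simp [norm_smul, hv, ht]
  have hdiff : ∀ t ∈ Metric.closedBall (0 : ℂ) ρ,
      HasDerivAt (fun t : ℂ => h (z + t • v)) (fderiv ℂ h (z + t • v) v) t := by
    intro t ht
    have h1 : HasDerivAt (fun t : ℂ => z + t • v) v t := by
      simpa using ((hasDerivAt_id t).smul_const v).const_add z
    exact (hd _ (hmem t ht)).hasFDerivAt.comp_hasDerivAt t h1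
  have key := Complex.norm_deriv_le_of_forall_mem_sphere_norm_le (c := 0) (R := ρ) (C := M)
    (f := fun t : ℂ => h (z + t • v)) hρ ?_ ?_
  · rw [(hdiff 0 (Metric.mem_closedBall_self hρ.le)).deriv] at key
    simpa using key
  · apply DifferentiableOn.diffContOnCl
    rw [closure_ball _ hρ.ne']
    exact fun t ht => (hdiff t ht).differentiableAt.differentiableWithinAt
  · intro t ht
    exact hM _ (hmem t (Metric.sphere_subset_closedBall ht))

lemma SE_fderiv_apply_diff {h : ℂ × ℂ → ℂ} {U : Set (ℂ × ℂ)} (hU : IsOpen U)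
    (hh : DifferentiableOn ℂ h U) (v : ℂ × ℂ) :
    DifferentiableOn ℂ (fun z => fderiv ℂ h z v) U := by
  intro z₀ hz₀
  apply DifferentiableAt.differentiableWithinAt
  obtain ⟨ε, hε, hball⟩ := Metric.isOpen_iff.1 hU z₀ hz₀
  -- radii
  obtain ⟨δ, hδ, hδε⟩ : ∃ δ > 0, 3 * δ < ε := ⟨ε / 4, by linarith, by linarith⟩
  obtain ⟨ρ, hρ, hρv⟩ : ∃ ρ > 0, ρ * ‖v‖ ≤ δ := by
    refine ⟨δ / (‖v‖ + 1), by positivity, ?_⟩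
    rw [div_mul_eq_mul_div, div_le_iff₀ (by positivity)]
    nlinarith [norm_nonneg v]
  have hsub : Metric.closedBall z₀ (3 * δ) ⊆ U :=
    (Metric.closedBall_subset_ball hδε).trans hball
  have hda : ∀ y ∈ Metric.closedBall z₀ (3 * δ), DifferentiableAt ℂ h y := fun y hy =>
    (hh y (hsub hy)).differentiableAt (hU.mem_nhds (hsub hy))
  obtain ⟨M, hM⟩ := (isCompact_closedBall z₀ (3 * δ)).exists_bound_of_continuousOn
    (f := h) (hh.continuousOn.mono hsub)
  have hfd : ∀ z ∈ Metric.closedBall z₀ (2 * δ), ‖fderiv ℂ h z‖ ≤ M / δ := by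
    intro z hz
    have hs : Metric.closedBall z δ ⊆ Metric.closedBall z₀ (3 * δ) := by
      apply Metric.closedBall_subset_closedBall'
      have := Metric.mem_closedBall.1 hz
      linarith
    exact SE_norm_fderiv_le hδ (fun y hy => hda y (hs hy)) (fun y hy => hM y (hs hy))
  have hmem : ∀ z ∈ Metric.ball z₀ δ, ∀ t ∈ Metric.closedBall (0 : ℂ) ρ,
      z + t • v ∈ Metric.closedBall z₀ (2 * δ) := by
    intro z hz t ht
    rw [Metric.mem_closedBall, dist_zero_right] at ht
    rw [Metric.mem_ball] at hz
    rw [Metric.mem_closedBall]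
    have h1 : dist (z + t • v) z ≤ δ := by
      rw [dist_eq_norm, add_sub_cancel_left, norm_smul]
      exact (mul_le_mul_of_nonneg_right ht (norm_nonneg v)).trans hρv
    linarith [dist_triangle (z + t • v) z z₀]
  have h23 : Metric.closedBall z₀ (2 * δ) ⊆ Metric.closedBall z₀ (3 * δ) :=
    Metric.closedBall_subset_closedBall (by linarith)
  -- Cauchy formula
  have hform : ∀ z ∈ Metric.ball z₀ δ, fderiv ℂ h z v =
      (2 * Real.pi * Complex.I)⁻¹ •
        ∮ t in C(0, ρ), (1 / (t - 0) ^ 2) • h (z + t • v) := by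
    intro z hz
    have hdiff : ∀ t ∈ Metric.closedBall (0 : ℂ) ρ,
        HasDerivAt (fun t : ℂ => h (z + t • v)) (fderiv ℂ h (z + t • v) v) t := by
      intro t ht
      have h1 : HasDerivAt (fun t : ℂ => z + t • v) v t := by
        simpa using ((hasDerivAt_id t).smul_const v).const_add z
      exact (hda _ (h23 (hmem z hz t ht))).hasFDerivAt.comp_hasDerivAt t h1
    rw [DifferentiableOn.deriv_eq_smul_circleIntegral hρ
      (fun t ht => (hdiff t ht).differentiableAt.differentiableWithinAt),
      (hdiff 0 (Metric.mem_closedBall_self hρ.le)).deriv, smul_smul, inv_mul_cancel₀, one_smul]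
    · simp
    · simp [Real.pi_ne_zero]
  have hcirc : ∀ θ : ℝ, circleMap 0 ρ θ ∈ Metric.closedBall (0 : ℂ) ρ := fun θ =>
    circleMap_mem_closedBall 0 hρ.le θ
  have hcne : ∀ θ : ℝ, circleMap 0 ρ θ ≠ 0 := fun θ => circleMap_ne_center hρ.ne'
  set c : ℝ → ℂ := fun θ => deriv (circleMap 0 ρ) θ * (1 / (circleMap 0 ρ θ - 0) ^ 2) with hc
  have hccont : Continuous c := by
    simp only [hc, deriv_circleMap, sub_zero]
    have : Continuous (circleMap 0 ρ) := continuous_circleMap 0 ρ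
    refine (this.mul continuous_const).mul (continuous_const.div (this.pow 2) ?_)
    exact fun θ => pow_ne_zero 2 (hcne θ)
  have main : HasFDerivAt (fun z => ∫ θ in (0:ℝ)..2 * Real.pi, c θ • h (z + circleMap 0 ρ θ • v))
      (∫ θ in (0:ℝ)..2 * Real.pi, c θ • fderiv ℂ h (z₀ + circleMap 0 ρ θ • v)) z₀ := by
    have hcontz : ∀ z ∈ Metric.ball z₀ δ,
        Continuous (fun θ : ℝ => c θ • h (z + circleMap 0 ρ θ • v)) := by
      intro z hz
      refine hccont.smul ?_
      refine continuous_iff_continuousAt.2 fun θ => ?_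
      refine ContinuousAt.comp (f := fun θ : ℝ => z + circleMap 0 ρ θ • v) (g := h)
        (hda _ (h23 (hmem z hz _ (hcirc θ)))).continuousAt ?_
      exact (continuous_const.add ((continuous_circleMap 0 ρ).smul continuous_const)).continuousAt
    refine intervalIntegral.hasFDerivAt_integral_of_dominated_of_fderiv_le
      (F := fun z θ => c θ • h (z + circleMap 0 ρ θ • v))
      (F' := fun z θ => c θ • fderiv ℂ h (z + circleMap 0 ρ θ • v))
      (bound := fun θ => ‖c θ‖ * (M / δ))
      (Metric.ball_mem_nhds z₀ hδ) ?_ ?_ ?_ ?_ ?_ ?_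
    · filter_upwards [Metric.ball_mem_nhds z₀ hδ] with z hz
      exact (hcontz z hz).aestronglyMeasurable
    · exact (hcontz z₀ (Metric.mem_ball_self hδ)).intervalIntegrable _ _
    · refine Measurable.aestronglyMeasurable ?_
      refine hccont.measurable.smul ((measurable_fderiv ℂ h).comp ?_)
      exact (continuous_const.add
        ((continuous_circleMap 0 ρ).smul continuous_const)).measurable
    · refine Filter.Eventually.of_forall fun θ _ z hz => ?_
      rw [norm_smul]
      exact mul_le_mul_of_nonneg_left (hfd _ (hmem z hz _ (hcirc θ))) (norm_nonneg _)
    · exact (hccont.norm.mul continuous_const).intervalIntegrable _ _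
    · refine Filter.Eventually.of_forall fun θ _ z hz => ?_
      have h1 := (hda _ (h23 (hmem z hz _ (hcirc θ)))).hasFDerivAt
      have h2 : HasFDerivAt (fun z : ℂ × ℂ => z + circleMap 0 ρ θ • v)
        (ContinuousLinearMap.id ℂ (ℂ × ℂ)) z := (hasFDerivAt_id z).add_const _
      have h3 := h1.comp z h2
      have h4 := h3.const_smul (c θ)
      rw [ContinuousLinearMap.comp_id] at h4
      exact h4
  have main2 := (main.const_smul ((2 * Real.pi * Complex.I : ℂ)⁻¹)).differentiableAt
  refine main2.congr_of_eventuallyEq ?_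
  filter_upwards [Metric.ball_mem_nhds z₀ hδ] with z hz
  rw [hform z hz]
  simp only [circleIntegral, hc, smul_eq_mul, Pi.smul_apply, mul_assoc]

lemma SE_contDiffOn {U : Set (ℂ × ℂ)} (hU : IsOpen U) (n : ℕ) :
    ∀ {h : ℂ × ℂ → ℂ}, DifferentiableOn ℂ h U → ContDiffOn ℂ n h U := by
  induction n with
  | zero => intro h hh; simpa using hh.continuousOn
  | succ n ih =>
    intro h hh
    rw [Nat.cast_add, Nat.cast_one, contDiffOn_succ_iff_fderiv_of_isOpen hU]
    refine ⟨hh, by simp, contDiffOn_clm_apply.2 fun v => ih (SE_fderiv_apply_diff hU hh v)⟩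
lemma SE_polar (n : ℕ) : ∀ (M : ContinuousMultilinearMap ℂ (fun _ : Fin n => ℂ × ℂ) ℂ),
    (∀ (σ : Equiv.Perm (Fin n)) (v : Fin n → ℂ × ℂ), M (v ∘ σ) = M v) →
    (∀ v : ℂ × ℂ, M (fun _ => v) = 0) → M = 0 := by
  induction n with
  | zero =>
    intro M _ h
    ext v
    have := h 0
    rwa [Subsingleton.elim (fun _ => (0 : ℂ × ℂ)) v] at this
  | succ n ih =>
    intro M hs h
    have hw : ∀ w, M.curryLeft w = 0 := by
      intro w
      apply ih
      · intro σ v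
        rw [ContinuousMultilinearMap.curryLeft_apply, ContinuousMultilinearMap.curryLeft_apply,
          ← hs (Equiv.Perm.decomposeFin.symm (0, σ)) (Fin.cons w v)]
        congr 1
        funext i
        refine Fin.cases ?_ (fun i => ?_) i <;> simp
      · intro u
        rw [ContinuousMultilinearMap.curryLeft_apply]
        have hd : HasDerivAt (fun s : ℂ => M (fun _ => u + s • w))
            (∑ i, M (Function.update (fun _ => u) i w)) 0 := by
          have h1 : HasDerivAt (fun s : ℂ => (fun _ : Fin (n+1) => u + s • w))
              (fun _ => w) 0 := by
            rw [hasDerivAt_pi]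
            intro i
            simpa using ((hasDerivAt_id (0:ℂ)).smul_const w).const_add u
          have h2 := (M.hasFDerivAt (fun _ : Fin (n+1) => u + (0:ℂ) • w)).comp_hasDerivAt 0 h1
          simpa [ContinuousMultilinearMap.linearDeriv_apply, Function.comp_def] using h2
        have h0 : (fun s : ℂ => M (fun _ => u + s • w)) = fun _ => 0 := by
          funext s; exact h _
        rw [h0] at hd
        have hz := hd.unique (hasDerivAt_const (0:ℂ) (0:ℂ))
        have hall : ∀ i, M (Function.update (fun _ => u) i w) = M (Fin.cons w (fun _ => u)) := by
          intro i
          rw [← hs (Equiv.swap 0 i) (Fin.cons w (fun _ => u))]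
          congr 1
          funext j
          simp only [Function.comp_apply]
          by_cases hj : j = i
          · subst hj; simp
          · rw [Function.update_of_ne hj]
            have : Equiv.swap 0 i j ≠ 0 := by
              intro hc
              apply hj
              have := congrArg (Equiv.swap 0 i) hc
              simpa using this
            obtain ⟨m, hm⟩ := Fin.exists_succ_eq.2 this
            rw [← hm, Fin.cons_succ]
        simp only [hall, Finset.sum_const, Finset.card_univ, Fintype.card_fin, nsmul_eq_mul] at hz
        rcases mul_eq_zero.1 hz with h' | h'
        · exact absurd h' (by exact_mod_cast Nat.succ_ne_zero n)
        · exact h'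
    ext v
    have := congrArg (fun L => L (Fin.tail v)) (hw (v 0))
    simpa [ContinuousMultilinearMap.curryLeft_apply, Fin.cons_self_tail] using this
lemma SE_iter {U : Set (ℂ × ℂ)} (hU : IsOpen U) {h : ℂ × ℂ → ℂ} {n : ℕ}
    (hc : ContDiffOn ℂ n h U) (v : ℂ × ℂ) : ∀ m ≤ n, ∀ (p : ℂ × ℂ) (t : ℂ), p + t • v ∈ U →
    deriv^[m] (fun t : ℂ => h (p + t • v)) t = iteratedFDeriv ℂ m h (p + t • v) (fun _ => v) := by
  intro m hm
  induction m with
  | zero => intro p t _; simp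
  | succ m ih =>
    intro p t hpt
    rw [Function.iterate_succ_apply']
    have hcont : Continuous fun t : ℂ => p + t • v := by fun_prop
    have hev : deriv^[m] (fun t : ℂ => h (p + t • v)) =ᶠ[nhds t]
        fun t => iteratedFDeriv ℂ m h (p + t • v) (fun _ => v) := by
      filter_upwards [(hU.preimage hcont).mem_nhds hpt] with s hs
      exact ih (by omega) p s hs
    rw [hev.deriv_eq]
    have hdif : DifferentiableAt ℂ (iteratedFDeriv ℂ m h) (p + t • v) :=
      (hc.contDiffAt (hU.mem_nhds hpt)).differentiableAt_iteratedFDeriv (by exact_mod_cast hm)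
    have h1 : HasDerivAt (fun t : ℂ => p + t • v) v t := by
      simpa using ((hasDerivAt_id t).smul_const v).const_add p
    have h2 := hdif.hasFDerivAt.comp_hasDerivAt t h1
    have h3 := (ContinuousMultilinearMap.apply ℂ (fun _ : Fin m => ℂ × ℂ) ℂ
      (fun _ => v)).hasFDerivAt.comp_hasDerivAt t h2
    simp only [ContinuousMultilinearMap.apply_apply, Function.comp_def] at h3
    rw [h3.deriv, iteratedFDeriv_succ_apply_left]
    rfl

/-- Holomorphic functions on `U` extended by zero. -/
def SEHol (U : Set (ℂ × ℂ)) : Type :=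
  {f : ℂ × ℂ → ℂ // DifferentiableOn ℂ f U ∧ ∀ z, z ∉ U → f z = 0}

open Classical in
/-- Directional derivative on `SEHol U`. -/
noncomputable def SEHol.D {U : Set (ℂ × ℂ)} (hU : IsOpen U) (w : ℂ × ℂ) (f : SEHol U) : SEHol U :=
  ⟨U.indicator (fun z => fderiv ℂ f.1 z w), by
    refine ⟨(SE_fderiv_apply_diff hU f.2.1 w).congr fun z hz => ?_, fun z hz => ?_⟩
    · exact Set.indicator_of_mem hz _
    · exact Set.indicator_of_notMem hz _⟩

lemma SEHol.D_apply {U : Set (ℂ × ℂ)} (hU : IsOpen U) (w : ℂ × ℂ) (f : SEHol U) {z : ℂ × ℂ}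
    (hz : z ∈ U) : (SEHol.D hU w f).1 z = fderiv ℂ f.1 z w := by
  change U.indicator (fun z => fderiv ℂ f.1 z w) z = _
  rw [Set.indicator_of_mem hz]

lemma SEHol.D_comm {U : Set (ℂ × ℂ)} (hU : IsOpen U) (w u : ℂ × ℂ) (f : SEHol U) :
    SEHol.D hU w (SEHol.D hU u f) = SEHol.D hU u (SEHol.D hU w f) := by
  apply Subtype.ext
  funext z
  by_cases hz : z ∈ U
  swap
  · rw [(SEHol.D hU w (SEHol.D hU u f)).2.2 z hz, (SEHol.D hU u (SEHol.D hU w f)).2.2 z hz]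
  have key : ∀ w u : ℂ × ℂ, (SEHol.D hU w (SEHol.D hU u f)).1 z
      = fderiv ℂ (fderiv ℂ f.1) z w u := by
    intro w u
    have h1 : (SEHol.D hU w (SEHol.D hU u f)).1 z = fderiv ℂ (SEHol.D hU u f).1 z w :=
      SEHol.D_apply hU _ _ hz
    have h2 : (SEHol.D hU u f).1 =ᶠ[nhds z] fun y => fderiv ℂ f.1 y u := by
      filter_upwards [hU.mem_nhds hz] with y hy
      exact SEHol.D_apply hU _ _ hy
    rw [h1, h2.fderiv_eq]
    have hc : ContDiffAt ℂ 2 f.1 z :=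
      (SE_contDiffOn hU 2 f.2.1).contDiffAt (hU.mem_nhds hz)
    have hd : DifferentiableAt ℂ (fderiv ℂ f.1) z :=
      (hc.fderiv_right (m := 1) (by norm_num)).differentiableAt (by norm_num)
    rw [fderiv_clm_apply hd (differentiableAt_const u)]
    simp
  rw [key, key]
  have hc : ContDiffAt ℂ 2 f.1 z :=
    (SE_contDiffOn hU 2 f.2.1).contDiffAt (hU.mem_nhds hz)
  exact (hc.isSymmSndFDerivAt (by simp)) w u

lemma SE_iter_foldr {U : Set (ℂ × ℂ)} (hU : IsOpen U) {h : ℂ × ℂ → ℂ} (f : SEHol U)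
    (hh : DifferentiableOn ℂ h U) (hf : ∀ z ∈ U, f.1 z = h z) (n : ℕ) :
    ∀ (v : Fin n → ℂ × ℂ), ∀ z ∈ U,
      iteratedFDeriv ℂ n h z v = (List.foldr (SEHol.D hU) f (List.ofFn v)).1 z := by
  induction n with
  | zero => intro v z hz; simp [hf z hz]
  | succ n ih =>
    intro v z hz
    rw [iteratedFDeriv_succ_apply_left, List.ofFn_succ, List.foldr_cons]
    have h1 : ∀ g : SEHol U, (SEHol.D hU (v 0) g).1 z = fderiv ℂ g.1 z (v 0) :=
      fun g => SEHol.D_apply hU _ _ hz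
    rw [h1]
    have h2 : (List.foldr (SEHol.D hU) f (List.ofFn fun i => v i.succ)).1 =ᶠ[nhds z]
        fun y => iteratedFDeriv ℂ n h y (Fin.tail v) := by
      filter_upwards [hU.mem_nhds hz] with y hy
      exact (ih _ y hy).symm
    rw [h2.fderiv_eq]
    have hdif : DifferentiableAt ℂ (iteratedFDeriv ℂ n h) z :=
      ((SE_contDiffOn hU (n+1) hh).contDiffAt (hU.mem_nhds hz)).differentiableAt_iteratedFDeriv
        (by exact_mod_cast Nat.lt_succ_self n)
    have h3 := (ContinuousMultilinearMap.apply ℂ (fun _ : Fin n => ℂ × ℂ) ℂ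
      (Fin.tail v)).hasFDerivAt.comp z hdif.hasFDerivAt
    have h4 : HasFDerivAt (fun y => iteratedFDeriv ℂ n h y (Fin.tail v)) _ z := h3
    rw [h4.fderiv]
    rfl

lemma SE_exists_dir {U : Set (ℂ × ℂ)} (hU : IsOpen U) (h0 : (0 : ℂ × ℂ) ∈ U) {h : ℂ × ℂ → ℂ}
    {k : ℕ} (hh : DifferentiableOn ℂ h U) (hne : iteratedFDeriv ℂ k h 0 ≠ 0) :
    ∃ v, iteratedFDeriv ℂ k h 0 (fun _ => v) ≠ 0 := by
  by_contra! hcon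
  apply hne
  apply SE_polar k _ _ hcon
  intro σ v
  classical
  let f : SEHol U := ⟨U.indicator h, hh.congr fun z hz => Set.indicator_of_mem hz _,
    fun z hz => Set.indicator_of_notMem hz _⟩
  have hf : ∀ z ∈ U, f.1 z = h z := fun z hz => Set.indicator_of_mem hz _
  rw [SE_iter_foldr hU f hh hf k _ 0 h0, SE_iter_foldr hU f hh hf k _ 0 h0]
  have : LeftCommutative (SEHol.D hU) := ⟨fun a b c => SEHol.D_comm hU a b c⟩
  rw [(Equiv.Perm.ofFn_comp_perm σ v).foldr_eq]

/-- One division step: lower bound for the derivative of the divided difference. -/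
lemma SE_dslope_step {R : ℝ} {g : ℂ → ℂ} {b : ℂ} {m : ℝ} (N : ℕ)
    (hg : DifferentiableOn ℂ g (Metric.ball 0 R))
    (hm : ∀ z ∈ Metric.ball (0 : ℂ) R, m ≤ (b * deriv^[N + 1] g z).re)
    {x : ℂ} (hx : x ∈ Metric.ball (0 : ℂ) R) :
    ∀ z ∈ Metric.ball (0 : ℂ) R, m / (N + 1) ≤ (b * deriv^[N] (dslope g x) z).re := by
  have hopen : IsOpen (Metric.ball (0 : ℂ) R) := Metric.isOpen_ball
  set G := dslope g x with hG
  have hGd : DifferentiableOn ℂ G (Metric.ball 0 R) :=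
    (Complex.differentiableOn_dslope (hopen.mem_nhds hx)).2 hg
  have hGa := hGd.analyticOnNhd hopen
  have hga := hg.analyticOnNhd hopen
  have hD : ∀ n, ∀ z ∈ Metric.ball (0 : ℂ) R,
      HasDerivAt (deriv^[n] G) (deriv^[n + 1] G z) z := by
    intro n z hz
    rw [Function.iterate_succ_apply']
    exact ((hGa.iterated_deriv n) z hz).differentiableAt.hasDerivAt
  have hid : ∀ n, ∀ z ∈ Metric.ball (0 : ℂ) R,
      (z - x) * deriv^[n + 1] G z + (n + 1) * deriv^[n] G z = deriv^[n + 1] g z := by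
    have hbase : ∀ z, g z = g x + (z - x) * G z := by
      intro z
      have := sub_smul_dslope g x z
      rw [smul_eq_mul] at this
      rw [hG, this]; ring
    intro n
    induction n with
    | zero =>
      intro z hz
      have h1 := (((hasDerivAt_id z).sub_const x).mul (hD 0 z hz)).const_add (g x)
      have h2 : HasDerivAt g _ z := h1.congr_of_eventuallyEq
        (Filter.Eventually.of_forall fun y => by simpa using hbase y)
      simp only [Function.iterate_one, zero_add]
      rw [h2.deriv]
      simp; ring
    | succ n ih =>
      intro z hz
      rw [Function.iterate_succ_apply' deriv (n + 1) g]
      have hev : deriv^[n + 1] g =ᶠ[nhds z]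
          fun z => (z - x) * deriv^[n + 1] G z + (n + 1) * deriv^[n] G z := by
        filter_upwards [hopen.mem_nhds hz] with y hy
        exact (ih y hy).symm
      have h1 := (((hasDerivAt_id z).sub_const x).mul (hD (n+1) z hz)).add
        ((hD n z hz).const_mul ((n : ℂ) + 1))
      have h2 : HasDerivAt (deriv^[n + 1] g) _ z := h1.congr_of_eventuallyEq hev
      rw [h2.deriv]
      simp; ring
  intro z hz
  set u : ℂ → ℂ := fun y => b * deriv^[N] G y with hu
  set γ : ℝ → ℂ := fun s => x + (s : ℂ) * (z - x) with hγ
  have hγmem : ∀ s ∈ Set.Icc (0 : ℝ) 1, γ s ∈ Metric.ball (0 : ℂ) R := by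
    intro s hs
    have := (convex_ball (0 : ℂ) R).add_smul_sub_mem hx hz hs
    simpa [hγ] using this
  set φ : ℝ → ℝ := fun s => s ^ (N + 1) * (u (γ s)).re - m / (N + 1) * s ^ (N + 1) with hφ
  have hγd : ∀ s, HasDerivAt γ (z - x) s := by
    intro s
    have : HasDerivAt (fun s : ℝ => (s : ℂ)) 1 s := Complex.ofRealCLM.hasDerivAt
    have h := (this.mul_const (z - x)).const_add x
    rw [one_mul] at h
    exact h
  have hud : ∀ s ∈ Set.Icc (0 : ℝ) 1, HasDerivAt (fun s => (u (γ s)).re)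
      ((b * deriv^[N + 1] G (γ s) * (z - x)).re) s := by
    intro s hs
    have h1 := (((hD N _ (hγmem s hs)).const_mul b).comp s (hγd s))
    exact Complex.reCLM.hasFDerivAt.comp_hasDerivAt s h1
  have hφd : ∀ s ∈ Set.Icc (0 : ℝ) 1, HasDerivAt φ
      (s ^ N * ((b * deriv^[N + 1] g (γ s)).re - m)) s := by
    intro s hs
    have h1 := (((hasDerivAt_pow (N + 1) s).mul (hud s hs)).sub
      ((hasDerivAt_pow (N + 1) s).const_mul (m / (N + 1))))
    refine h1.congr_deriv ?_
    rw [← hid N _ (hγmem s hs)]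
    have e1 : γ s - x = s * (z - x) := by simp [hγ]
    rw [e1]
    have e2 : (b * (s * (z - x) * deriv^[N + 1] G (γ s) + (N + 1) * deriv^[N] G (γ s))).re
        = s * (b * deriv^[N + 1] G (γ s) * (z - x)).re + (N + 1) * (u (γ s)).re := by
      have e3 : b * (s * (z - x) * deriv^[N + 1] G (γ s) + (N + 1) * deriv^[N] G (γ s))
          = ((s : ℝ) : ℂ) * (b * deriv^[N + 1] G (γ s) * (z - x))
            + (((N : ℝ) + 1 : ℝ) : ℂ) * (u (γ s)) := by
        simp only [hu]; push_cast; ring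
      rw [e3, Complex.add_re, Complex.re_ofReal_mul, Complex.re_ofReal_mul]
    rw [e2]
    have : (N : ℝ) + 1 ≠ 0 := by positivity
    push_cast
    field_simp
    ring
  have hmono : MonotoneOn φ (Set.Icc 0 1) := by
    apply monotoneOn_of_deriv_nonneg (convex_Icc 0 1)
    · exact fun s hs => (hφd s hs).continuousAt.continuousWithinAt
    · exact fun s hs => (hφd s (interior_subset hs)).differentiableAt.differentiableWithinAt
    · intro s hs
      have hs' := interior_subset hs
      rw [(hφd s hs').deriv]
      exact mul_nonneg (pow_nonneg hs'.1 _) (sub_nonneg.2 (hm _ (hγmem s hs')))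
  have := hmono (Set.left_mem_Icc.2 zero_le_one) (Set.right_mem_Icc.2 zero_le_one) zero_le_one
  simp [hφ, hγ] at this
  exact this

lemma SE_lower {R r : ℝ} (hr : 0 < r) (hrR : r < R) {b : ℂ} (N : ℕ) :
    ∀ {g : ℂ → ℂ} {m : ℝ}, DifferentiableOn ℂ g (Metric.ball 0 R) →
    (∀ z ∈ Metric.ball (0 : ℂ) R, m ≤ (b * deriv^[N] g z).re) →
    ∃ x : Fin N → ℂ, ∀ z ∈ Metric.closedBall (0 : ℂ) r,
      m / (N.factorial * 2 ^ N) * ∏ i, ‖z - x i‖ ≤ ‖b‖ * ‖g z‖ := by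
  have hsub : Metric.closedBall (0 : ℂ) r ⊆ Metric.ball 0 R := Metric.closedBall_subset_ball hrR
  induction N with
  | zero =>
    intro g m hg hm
    refine ⟨fun _ => 0, fun z hz => ?_⟩
    have h1 := hm z (hsub hz)
    have h2 := Complex.re_le_norm (b * g z)
    rw [norm_mul] at h2
    simp at h1 ⊢
    simp at h2
    linarith
  | succ N ih =>
    intro g m hg hm
    obtain ⟨x₀, hx₀, hmin⟩ := (isCompact_closedBall (0 : ℂ) r).exists_isMinOn
      ⟨0, Metric.mem_closedBall_self hr.le⟩ ((hg.continuousOn.mono hsub).norm)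
    have hGd : DifferentiableOn ℂ (dslope g x₀) (Metric.ball 0 R) :=
      (Complex.differentiableOn_dslope (Metric.isOpen_ball.mem_nhds (hsub hx₀))).2 hg
    obtain ⟨x, hx⟩ := ih hGd (SE_dslope_step N hg hm (hsub hx₀))
    refine ⟨Fin.cons x₀ x, fun z hz => ?_⟩
    have h1 := hx z hz
    have h2 : ‖z - x₀‖ * ‖dslope g x₀ z‖ ≤ 2 * ‖g z‖ := by
      rw [← norm_mul, ← smul_eq_mul, sub_smul_dslope]
      have := norm_sub_le (g z) (g x₀)
      have h3 : ‖g x₀‖ ≤ ‖g z‖ := hmin hz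
      linarith
    rw [Fin.prod_univ_succ]
    simp only [Fin.cons_zero, Fin.cons_succ]
    have e : m / (((N + 1).factorial : ℝ) * 2 ^ (N + 1)) * (‖z - x₀‖ * ∏ i, ‖z - x i‖)
      = ‖z - x₀‖ / 2 * (m / (N + 1) / (N.factorial * 2 ^ N) * ∏ i, ‖z - x i‖) := by
      rw [Nat.factorial_succ]
      have : (N.factorial : ℝ) ≠ 0 := by positivity
      push_cast
      field_simp
      ring
    rw [e]
    calc _ ≤ ‖z - x₀‖ / 2 * (‖b‖ * ‖dslope g x₀ z‖) :=
          mul_le_mul_of_nonneg_left h1 (by positivity)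
      _ = ‖b‖ * (‖z - x₀‖ * ‖dslope g x₀ z‖) / 2 := by ring
      _ ≤ ‖b‖ * (2 * ‖g z‖) / 2 := by gcongr
      _ = _ := by ring

lemma SE_int_norm {s r : ℝ} (hs : 0 ≤ s) (hs2 : s < 2) :
    ∃ C : ENNReal, C < ⊤ ∧ ∀ x : ℂ,
      ∫⁻ z in Metric.ball (0 : ℂ) r, ENNReal.ofReal (‖z - x‖ ^ (-s)) ≤ C := by
  have hmeas : Measurable (fun z : ℂ => ‖z‖ ^ (-s)) := measurable_norm.pow_const _
  have hIntg : IntegrableOn (fun z : ℂ => ‖z‖ ^ (-s)) (Metric.ball 0 1) := by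
    refine integrableOn_ball_of_norm_le_rpow (α := s) (C := 1) (by simp) (by simpa using hs2) ?_
      hmeas.aestronglyMeasurable
    refine Filter.Eventually.of_forall fun z => ?_
    rw [one_mul, Real.norm_of_nonneg (Real.rpow_nonneg (norm_nonneg _) _)]
  set F : ℂ → ENNReal := (Metric.ball (0 : ℂ) 1).indicator
    (fun z => ENNReal.ofReal (‖z‖ ^ (-s))) with hF
  have hFm : Measurable F := hmeas.ennreal_ofReal.indicator measurableSet_ball
  have hFint : ∫⁻ z, F z < ⊤ := by
    rw [hF, lintegral_indicator measurableSet_ball]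
    exact hIntg.lintegral_lt_top
  refine ⟨(∫⁻ z, F z) + volume (Metric.ball (0 : ℂ) r),
    ENNReal.add_lt_top.2 ⟨hFint, measure_ball_lt_top⟩, fun x => ?_⟩
  have hpt : ∀ z, ENNReal.ofReal (‖z - x‖ ^ (-s)) ≤ F (z - x) + 1 := by
    intro z
    by_cases hz : z - x ∈ Metric.ball (0 : ℂ) 1
    · rw [hF, Set.indicator_of_mem hz]; exact le_self_add
    · refine le_trans ?_ le_add_self
      rw [← ENNReal.ofReal_one]
      apply ENNReal.ofReal_le_ofReal
      simp only [Metric.mem_ball, dist_zero_right, not_lt] at hz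
      exact Real.rpow_le_one_of_one_le_of_nonpos hz (by linarith)
  calc _ ≤ ∫⁻ z in Metric.ball (0 : ℂ) r, (F (z - x) + 1) := lintegral_mono hpt
    _ = (∫⁻ z in Metric.ball (0 : ℂ) r, F (z - x)) + volume (Metric.ball (0 : ℂ) r) := by
      rw [lintegral_add_right _ measurable_const]; simp
    _ ≤ (∫⁻ z, F (z - x)) + volume (Metric.ball (0 : ℂ) r) := by
      gcongr
      exact Measure.restrict_le_self
    _ = _ := by rw [lintegral_sub_right_eq_self F x]

lemma SE_slice_int {s r A : ℝ} {N : ℕ} (hN : 1 ≤ N) (hs : 0 < s) (hA : 0 < A) {C : ENNReal}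
    (hC : ∀ x : ℂ,
      ∫⁻ z in Metric.ball (0 : ℂ) r, ENNReal.ofReal (‖z - x‖ ^ (-(s * N))) ≤ C)
    {g : ℂ → ℂ} {x : Fin N → ℂ}
    (hg : ∀ z ∈ Metric.ball (0 : ℂ) r, A * ∏ i, ‖z - x i‖ ≤ ‖g z‖) :
    ∫⁻ z in Metric.ball (0 : ℂ) r, ENNReal.ofReal (‖g z‖ ^ (-s)) ≤ ENNReal.ofReal (A ^ (-s)) * C := by
  have hN0 : (0 : ℝ) < N := by exact_mod_cast hN
  have hfin : ∀ᵐ z ∂(volume.restrict (Metric.ball (0 : ℂ) r)), z ∉ Set.range x :=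
    measure_eq_zero_iff_ae_notMem.1 ((Set.finite_range x).measure_zero _)
  have hpt : ∀ᵐ z ∂(volume.restrict (Metric.ball (0 : ℂ) r)),
      ENNReal.ofReal (‖g z‖ ^ (-s)) ≤ ENNReal.ofReal (A ^ (-s)) *
        ∑ i, ENNReal.ofReal (1 / N) * ENNReal.ofReal (‖z - x i‖ ^ (-(s * N))) := by
    filter_upwards [hfin, ae_restrict_mem measurableSet_ball] with z hz hzb
    have hpos : ∀ i, 0 < ‖z - x i‖ := fun i =>
      norm_pos_iff.2 (sub_ne_zero.2 fun h => hz ⟨i, h.symm⟩)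
    have hprod : 0 < ∏ i, ‖z - x i‖ := Finset.prod_pos fun i _ => hpos i
    have h1 : ‖g z‖ ^ (-s) ≤ A ^ (-s) * ∏ i, ‖z - x i‖ ^ (-s) := by
      rw [Real.finsetProd_rpow _ _ (fun i _ => norm_nonneg _), ← Real.mul_rpow hA.le hprod.le]
      exact Real.rpow_le_rpow_of_nonpos (mul_pos hA hprod) (hg z hzb) (by linarith)
    have h2 : ∏ i, ‖z - x i‖ ^ (-s) ≤ ∑ i, (1 / N : ℝ) * ‖z - x i‖ ^ (-(s * N)) := by
      have h3 := Real.geom_mean_le_arith_mean_weighted Finset.univ (fun _ : Fin N => (1 / N : ℝ))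
        (fun i => ‖z - x i‖ ^ (-(s * N))) (fun _ _ => by positivity)
        (by simp; field_simp) (fun i _ => by positivity)
      refine le_trans (le_of_eq ?_) h3
      refine Finset.prod_congr rfl fun i _ => ?_
      rw [← Real.rpow_mul (norm_nonneg _)]
      congr 1
      field_simp
    calc ENNReal.ofReal (‖g z‖ ^ (-s))
        ≤ ENNReal.ofReal (A ^ (-s) * ∑ i, (1 / N : ℝ) * ‖z - x i‖ ^ (-(s * N))) :=
          ENNReal.ofReal_le_ofReal (h1.trans
            (mul_le_mul_of_nonneg_left h2 (Real.rpow_nonneg hA.le _)))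
      _ = _ := by
        rw [ENNReal.ofReal_mul (Real.rpow_nonneg hA.le _),
          ENNReal.ofReal_sum_of_nonneg (fun i _ => by positivity)]
        congr 1
        refine Finset.sum_congr rfl fun i _ => ?_
        rw [ENNReal.ofReal_mul (by positivity)]
  have hm : ∀ i, Measurable (fun z : ℂ => ENNReal.ofReal (‖z - x i‖ ^ (-(s * N)))) := fun i =>
    (((measurable_id.sub_const (x i)).norm).pow_const _).ennreal_ofReal
  refine (lintegral_mono_ae hpt).trans ?_
  rw [lintegral_const_mul _ (Finset.measurable_sum _ fun i _ => (hm i).const_mul _),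
    lintegral_finsetSum _ (fun i _ => (hm i).const_mul _)]
  gcongr
  calc _ ≤ ∑ i : Fin N, ENNReal.ofReal (1 / N) * C := by
        refine Finset.sum_le_sum fun i _ => ?_
        rw [lintegral_const_mul _ (hm i)]
        gcongr
        exact hC (x i)
    _ = C := by
      rw [Finset.sum_const, Finset.card_univ, Fintype.card_fin, nsmul_eq_mul, ← mul_assoc,
        ← ENNReal.ofReal_natCast, ← ENNReal.ofReal_mul hN0.le, mul_one_div_cancel hN0.ne']
      simp

lemma SE_slice {U : Set (ℂ × ℂ)} (hU : IsOpen U) (h0 : (0 : ℂ × ℂ) ∈ U) {h : ℂ × ℂ → ℂ}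
    (hh : DifferentiableOn ℂ h U) {N : ℕ} (hN : 1 ≤ N)
    (ha : iteratedFDeriv ℂ N h 0 (fun _ => ((0 : ℂ), (1 : ℂ))) ≠ 0) {s : ℝ} (hs : 0 < s)
    (hsN : s * N < 2) :
    ∃ r > 0, Metric.ball (0 : ℂ) r ×ˢ Metric.ball (0 : ℂ) r ⊆ U ∧
      ∃ C : ENNReal, C < ⊤ ∧ ∀ z₁ ∈ Metric.ball (0 : ℂ) r,
        ∫⁻ w in Metric.ball (0 : ℂ) r, ENNReal.ofReal (‖h (z₁, w)‖ ^ (-s)) ≤ C := by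
  have hcd := SE_contDiffOn hU N hh
  set a := iteratedFDeriv ℂ N h 0 (fun _ => ((0 : ℂ), (1 : ℂ))) with had
  have hcont : ContinuousAt (fun z => (a⁻¹ *
      iteratedFDeriv ℂ N h z (fun _ => ((0 : ℂ), (1 : ℂ)))).re) 0 := by
    have h1 : ContinuousAt (iteratedFDeriv ℂ N h) 0 :=
      (hcd.contDiffAt (hU.mem_nhds h0)).continuousAt_iteratedFDeriv le_rfl
    have h2 : ContinuousAt (fun z => iteratedFDeriv ℂ N h z (fun _ => ((0 : ℂ), (1 : ℂ)))) 0 :=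
      (ContinuousMultilinearMap.apply ℂ (fun _ : Fin N => ℂ × ℂ) ℂ
        (fun _ => ((0 : ℂ), (1 : ℂ)))).continuous.continuousAt.comp h1
    exact Complex.continuous_re.continuousAt.comp (continuousAt_const.mul h2)
  have hev : ∀ᶠ z in nhds (0 : ℂ × ℂ), z ∈ U ∧ 1 / 2 < (a⁻¹ *
      iteratedFDeriv ℂ N h z (fun _ => ((0 : ℂ), (1 : ℂ)))).re := by
    refine Filter.Eventually.and (hU.mem_nhds h0) (hcont.eventually (lt_mem_nhds ?_))
    beta_reduce
    rw [← had, inv_mul_cancel₀ ha]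
    norm_num
  obtain ⟨R, hR, hball⟩ := Metric.eventually_nhds_iff_ball.1 hev
  have hRmem : ∀ z₁ ∈ Metric.ball (0 : ℂ) R, ∀ w ∈ Metric.ball (0 : ℂ) R,
      ((z₁, w) : ℂ × ℂ) ∈ Metric.ball (0 : ℂ × ℂ) R := by
    intro z₁ h1 w h2
    rw [Metric.mem_ball, dist_zero_right] at *
    exact max_lt h1 h2
  obtain ⟨C, hC, hCb⟩ := SE_int_norm (s := s * N) (r := R / 2) (by positivity) hsN
  have hRR : Metric.ball (0 : ℂ) (R / 2) ⊆ Metric.ball 0 R :=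
    Metric.ball_subset_ball (by linarith)
  have hna : 0 < ‖a‖ := norm_pos_iff.2 ha
  refine ⟨R / 2, by positivity, ?_,
    ENNReal.ofReal (((1 / 2) / (N.factorial * 2 ^ N) * ‖a‖) ^ (-s)) * C,
    ENNReal.mul_lt_top ENNReal.ofReal_lt_top hC, ?_⟩
  · rintro ⟨z₁, w⟩ ⟨h1, h2⟩
    exact (hball _ (hRmem _ (hRR h1) _ (hRR h2))).1
  · intro z₁ hz₁
    have hfun : (fun w => h (z₁, w)) = fun t : ℂ => h ((z₁, 0) + t • ((0 : ℂ), (1 : ℂ))) := by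
      funext t; simp
    have hgd : DifferentiableOn ℂ (fun w => h (z₁, w)) (Metric.ball 0 R) := by
      refine hh.comp (f := fun w : ℂ => (z₁, w)) ?_ ?_
      · exact ((differentiable_const z₁).prodMk differentiable_id).differentiableOn
      · intro w hw
        exact (hball _ (hRmem _ (hRR hz₁) _ hw)).1
    obtain ⟨x, hx⟩ := SE_lower (r := R / 2) (R := R) (by linarith) (by linarith) (b := a⁻¹) N
      (m := 1 / 2) hgd (by
        intro w hw
        have hb := hball _ (hRmem _ (hRR hz₁) _ hw)
        have heq : ((z₁, 0) + w • ((0 : ℂ), (1 : ℂ)) : ℂ × ℂ) = (z₁, w) := by simp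
        rw [hfun, SE_iter hU hcd _ N le_rfl (z₁, 0) w (by rw [heq]; exact hb.1), heq]
        exact hb.2.le)
    refine SE_slice_int hN hs (by positivity) hCb (x := x) ?_
    intro w hw
    have := hx w (Metric.ball_subset_closedBall hw)
    rw [norm_inv, inv_mul_eq_div, le_div_iff₀ hna] at this
    linarith

lemma SE_T {U : Set (ℂ × ℂ)} (hU : IsOpen U) (h0 : (0 : ℂ × ℂ) ∈ U) {h : ℂ × ℂ → ℂ}
    (hh : DifferentiableOn ℂ h U) {N : ℕ} (hN : 1 ≤ N)
    (ha : iteratedFDeriv ℂ N h 0 (fun _ => ((0 : ℂ), (1 : ℂ))) ≠ 0) {s a : ℝ} (hs : 0 < s)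
    (hsN : s * N < 2) (ha0 : 0 ≤ a) (ha2 : a < 2) :
    ∃ V : Set (ℂ × ℂ), IsOpen V ∧ (0 : ℂ × ℂ) ∈ V ∧
      IntegrableOn (fun z : ℂ × ℂ => ‖z.1‖ ^ (-a) * ‖h z‖ ^ (-s)) V volume := by
  obtain ⟨r, hr, hsub, C, hC, hCb⟩ := SE_slice hU h0 hh hN ha hs hsN
  refine ⟨Metric.ball (0 : ℂ) r ×ˢ Metric.ball (0 : ℂ) r,
    Metric.isOpen_ball.prod Metric.isOpen_ball,
    ⟨Metric.mem_ball_self hr, Metric.mem_ball_self hr⟩, ?_⟩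
  have hmB : MeasurableSet (Metric.ball (0 : ℂ) r ×ˢ Metric.ball (0 : ℂ) r) :=
    measurableSet_ball.prod measurableSet_ball
  have hm1 : AEMeasurable h (volume.restrict (Metric.ball (0 : ℂ) r ×ˢ Metric.ball (0 : ℂ) r)) :=
    (hh.continuousOn.mono hsub).aemeasurable hmB
  have hm : AEMeasurable (fun z : ℂ × ℂ => ‖z.1‖ ^ (-a) * ‖h z‖ ^ (-s))
      (volume.restrict (Metric.ball (0 : ℂ) r ×ˢ Metric.ball (0 : ℂ) r)) :=
    ((measurable_fst.norm.pow_const _).aemeasurable).mul (hm1.norm.pow_const _)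
  refine ⟨hm.aestronglyMeasurable, ?_⟩
  rw [hasFiniteIntegral_iff_ofReal (Filter.Eventually.of_forall fun z => by positivity)]
  have hm' := hm.ennreal_ofReal
  rw [Measure.volume_eq_prod, ← Measure.prod_restrict] at hm' ⊢
  rw [lintegral_prod _ hm']
  obtain ⟨K, hK, hKb⟩ := SE_int_norm (s := a) (r := r) ha0 ha2
  have hK0 := hKb 0
  simp only [sub_zero] at hK0
  calc _ ≤ ∫⁻ z₁ in Metric.ball (0 : ℂ) r, ENNReal.ofReal (‖z₁‖ ^ (-a)) * C := by
        refine setLIntegral_mono' measurableSet_ball fun z₁ hz₁ => ?_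
        simp only [ENNReal.ofReal_mul (Real.rpow_nonneg (norm_nonneg z₁) (-a))]
        rw [lintegral_const_mul' _ _ ENNReal.ofReal_ne_top]
        gcongr
        exact hCb z₁ hz₁
    _ = (∫⁻ z₁ in Metric.ball (0 : ℂ) r, ENNReal.ofReal (‖z₁‖ ^ (-a))) * C := by
        rw [lintegral_mul_const' _ _ hC.ne]
    _ < ⊤ := ENNReal.mul_lt_top (hK0.trans_lt hK) hC

lemma SE_skoda {U : Set (ℂ × ℂ)} (hU : IsOpen U) (h0 : (0 : ℂ × ℂ) ∈ U) {h : ℂ × ℂ → ℂ}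
    (hh : DifferentiableOn ℂ h U) {N : ℕ} (hN : 1 ≤ N) {v : ℂ × ℂ}
    (ha : iteratedFDeriv ℂ N h 0 (fun _ => v) ≠ 0) {s : ℝ} (hs : 0 < s)
    (hsN : s * N < 2) :
    ∃ V : Set (ℂ × ℂ), IsOpen V ∧ (0 : ℂ × ℂ) ∈ V ∧
      IntegrableOn (fun z : ℂ × ℂ => ‖h z‖ ^ (-s)) V volume := by
  have hv : v ≠ 0 := by
    rintro rfl
    exact ha ((iteratedFDeriv ℂ N h 0).map_coord_zero ⟨0, hN⟩ rfl)
  have he : ((0 : ℂ), (1 : ℂ)) ≠ 0 := by simp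
  obtain ⟨L, hL⟩ := SeparatingDual.exists_continuousLinearEquiv_apply_eq (R := ℂ) he hv
  have hLU : IsOpen (L ⁻¹' U) := hU.preimage L.continuous
  have hL0 : (0 : ℂ × ℂ) ∈ L ⁻¹' U := by simpa using h0
  have hhL : DifferentiableOn ℂ (h ∘ L) (L ⁻¹' U) :=
    hh.comp L.differentiable.differentiableOn (fun z hz => hz)
  have haL : iteratedFDeriv ℂ N (h ∘ L) 0 (fun _ => ((0 : ℂ), (1 : ℂ))) ≠ 0 := by
    have := L.iteratedFDerivWithin_comp_right h (s := Set.univ) uniqueDiffOn_univ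
      (x := 0) (Set.mem_univ _) N
    rw [Set.preimage_univ, iteratedFDerivWithin_univ, iteratedFDerivWithin_univ] at this
    rw [this]
    simpa [hL] using ha
  obtain ⟨W, hW, hW0, hIntg⟩ := SE_T hLU hL0 hhL hN haL hs hsN le_rfl (by norm_num : (0:ℝ) < 2)
  simp only [neg_zero, Real.rpow_zero, one_mul, Function.comp_apply] at hIntg
  refine ⟨L.symm ⁻¹' W, hW.preimage L.symm.continuous, by simpa using hW0, ?_⟩
  have hemb : MeasurableEmbedding L := L.toHomeomorph.measurableEmbedding
  have h1 : IntegrableOn (fun z : ℂ × ℂ => ‖h z‖ ^ (-s)) (L.symm ⁻¹' W)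
      (Measure.map L volume) := by
    rw [hemb.integrableOn_map_iff]
    have : L ⁻¹' (L.symm ⁻¹' W) = W := by ext z; simp
    rw [this]
    exact hIntg
  have hvol : (volume : Measure (ℂ × ℂ)).IsAddHaarMeasure := by
    rw [Measure.volume_eq_prod]; infer_instance
  have hHaar : (Measure.map L (volume : Measure (ℂ × ℂ))).IsAddHaarMeasure :=
    L.isAddHaarMeasure_map volume
  have h2 := Measure.isAddLeftInvariant_eq_smul (volume : Measure (ℂ × ℂ))
    (Measure.map L (volume : Measure (ℂ × ℂ)))
  rw [h2, IntegrableOn, Measure.restrict_smul]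
  exact Integrable.smul_measure_nnreal h1

lemma SE_F1 {a : ℝ} (ha2 : a < 2) :
    IntegrableOn (fun z : ℂ × ℂ => ‖z.1‖ ^ (-a) * ‖z.2‖ ^ (-a))
      (Metric.ball (0 : ℂ) 1 ×ˢ Metric.ball (0 : ℂ) 1) volume := by
  have hIntg : IntegrableOn (fun z : ℂ => ‖z‖ ^ (-a)) (Metric.ball 0 1) := by
    refine integrableOn_ball_of_norm_le_rpow (α := a) (C := 1) (by simp) (by simpa using ha2) ?_
      (measurable_norm.pow_const _).aestronglyMeasurable
    refine Filter.Eventually.of_forall fun z => ?_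
    rw [one_mul, Real.norm_of_nonneg (Real.rpow_nonneg (norm_nonneg _) _)]
  rw [IntegrableOn, Measure.volume_eq_prod, ← Measure.prod_restrict]
  exact hIntg.mul_prod hIntg

lemma SE_exists_order {U : Set (ℂ × ℂ)} (hU : IsOpen U) (h0 : (0 : ℂ × ℂ) ∈ U) {h : ℂ × ℂ → ℂ}
    (hh : DifferentiableOn ℂ h U) (hz : h 0 = 0)
    (hdiv₁ : ¬ ∀ᶠ w in nhds (0 : ℂ), h (0, w) = 0) :
    ∃ N : ℕ, 1 ≤ N ∧ iteratedFDeriv ℂ N h 0 (fun _ => ((0 : ℂ), (1 : ℂ))) ≠ 0 := by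
  by_contra! hcon
  apply hdiv₁
  have hc : Continuous fun w : ℂ => ((0 : ℂ), w) := by fun_prop
  obtain ⟨R, hR, hball⟩ := Metric.isOpen_iff.1 (hU.preimage hc) 0 h0
  have hgd : DifferentiableOn ℂ (fun w => h (0, w)) (Metric.ball 0 R) :=
    hh.comp (f := fun w : ℂ => ((0 : ℂ), w))
      ((differentiable_const (0 : ℂ)).prodMk differentiable_id).differentiableOn hball
  filter_upwards [Metric.ball_mem_nhds (0 : ℂ) hR] with w hw
  have hsum := Complex.hasSum_taylorSeries_on_ball (f := fun w => h (0, w)) hgd hw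
  refine hsum.unique ?_
  convert hasSum_zero with n
  have : iteratedDeriv n (fun w => h (0, w)) 0 = 0 := by
    rcases Nat.eq_zero_or_pos n with rfl | hn
    · rw [iteratedDeriv_zero]; exact hz
    · have hfun : (fun w => h (0, w)) = fun t : ℂ => h (0 + t • ((0 : ℂ), (1 : ℂ))) := by
        funext t; simp
      rw [iteratedDeriv_eq_iterate, hfun,
        SE_iter hU (SE_contDiffOn hU n hh) _ n le_rfl 0 0 (by simpa using h0)]
      simpa using hcon n hn
  simp [this]

lemma SE_rpow_mono {x p q : ℝ} (hx0 : 0 ≤ x) (hx1 : x ≤ 1) (hp : 0 < p) (hpq : p ≤ q) :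
    x ^ (-p) ≤ x ^ (-q) := by
  rcases hx0.eq_or_lt with rfl | hx
  · rw [Real.zero_rpow (by linarith), Real.zero_rpow (by linarith)]
  · exact Real.rpow_le_rpow_of_exponent_ge hx hx1 (by linarith)

theorem singularity_exponent_gt_one_third
    (k : ℕ) (hk : 1 ≤ k)
    (h : ℂ × ℂ → ℂ) (U : Set (ℂ × ℂ)) (hU : IsOpen U) (h0U : (0 : ℂ × ℂ) ∈ U)
    (hh : DifferentiableOn ℂ h U)
    (horder_lt : ∀ j < k, iteratedFDeriv ℂ j h 0 = 0)
    (horder_ne : iteratedFDeriv ℂ k h 0 ≠ 0)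
    (hdiv₁ : ¬ ∀ᶠ w in nhds (0 : ℂ), h (0, w) = 0)
    (hdiv₂ : ¬ ∀ᶠ w in nhds (0 : ℂ), h (w, 0) = 0) :
    ∃ c : ℝ, 1 / (3 * (k : ℝ)) < c ∧
      ∃ V : Set (ℂ × ℂ), IsOpen V ∧ (0 : ℂ × ℂ) ∈ V ∧
        IntegrableOn
          (fun z : ℂ × ℂ => ‖z.1 ^ (2 * k) * z.2 ^ k * h z‖ ^ (-(2 * c))) V volume := by
  have hz : h 0 = 0 := by
    have := congrArg (fun M => M 0) (horder_lt 0 hk)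
    simpa using this
  obtain ⟨N, hN, hNne⟩ := SE_exists_order hU h0U hh hz hdiv₁
  obtain ⟨v, hv⟩ := SE_exists_dir hU h0U hh horder_ne
  have hkR : (1 : ℝ) ≤ k := by exact_mod_cast hk
  have hNR : (1 : ℝ) ≤ N := by exact_mod_cast hN
  -- `e = η`, all other parameters are expressed through it
  obtain ⟨e, he0, heN, he1⟩ : ∃ e : ℝ, 0 < e ∧ 18 * e * N = 1 ∧ e ≤ 1 / 18 := by
    refine ⟨1 / (18 * N), by positivity, by field_simp, ?_⟩
    rw [div_le_div_iff₀ (by positivity) (by norm_num)]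
    linarith
  set a : ℝ := 2 - e with ha
  set b : ℝ := 18 * e with hb
  set d : ℝ := (2 - e) / k with hd
  set c : ℝ := 1 / (3 * (k : ℝ)) + e / (4 * k) with hc
  have hkpos : (0 : ℝ) < k := by linarith
  have hcpos : 0 < c := by positivity
  have hkc : k * c = 1 / 3 + e / 4 := by rw [hc]; field_simp
  have hdk : d * k = 2 - e := by rw [hd]; field_simp
  have hdpos : 0 < d := by rw [hd]; exact div_pos (by linarith) hkpos
  have hI1 := SE_F1 (a := a) (by linarith)
  obtain ⟨V₂, hV₂o, hV₂0, hI2⟩ := SE_T hU h0U hh hN hNne (s := b) (a := a) (by linarith)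
    (by rw [hb]; linarith) (by linarith) (by linarith)
  obtain ⟨V₃, hV₃o, hV₃0, hI3⟩ := SE_skoda hU h0U hh hk hv hdpos (by linarith)
  -- region where `h` is small
  obtain ⟨V₄, hV₄s, hV₄o, hV₄0⟩ : ∃ V₄ ⊆ {z | z ∈ U ∧ ‖h z‖ ≤ 1}, IsOpen V₄ ∧ (0 : ℂ × ℂ) ∈ V₄ := by
    rw [← mem_nhds_iff]
    have hcont : ContinuousAt h 0 := hh.continuousOn.continuousAt (hU.mem_nhds h0U)
    have h1 : ∀ᶠ z in nhds (0 : ℂ × ℂ), ‖h z‖ < 1 :=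
      hcont.norm.eventually (gt_mem_nhds (by simp [hz]))
    filter_upwards [hU.mem_nhds h0U, h1] with z h2 h3
    exact ⟨h2, h3.le⟩
  set V₁ : Set (ℂ × ℂ) := Metric.ball (0 : ℂ) 1 ×ˢ Metric.ball (0 : ℂ) 1 with hV₁
  have hV₁o : IsOpen V₁ := Metric.isOpen_ball.prod Metric.isOpen_ball
  have hV₁0 : (0 : ℂ × ℂ) ∈ V₁ := ⟨Metric.mem_ball_self one_pos, Metric.mem_ball_self one_pos⟩
  set V : Set (ℂ × ℂ) := V₁ ∩ V₂ ∩ (V₃ ∩ V₄) with hV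
  have hVo : IsOpen V := (hV₁o.inter hV₂o).inter (hV₃o.inter hV₄o)
  refine ⟨c, ?_, V, hVo, ⟨⟨hV₁0, hV₂0⟩, hV₃0, hV₄0⟩, ?_⟩
  · rw [hc]
    have : 0 < e / (4 * k) := by positivity
    linarith
  have hJ1 := (hI1.mono_set (s := V) (fun z hz => hz.1.1)).const_mul (1 / 2)
  have hJ2 := (hI2.mono_set (s := V) (fun z hz => hz.1.2)).const_mul (1 / 6 + e)
  have hJ3 := (hI3.mono_set (s := V) (fun z hz => hz.2.1)).const_mul (1 / 3 - e)
  refine Integrable.mono' ((hJ1.add hJ2).add hJ3) ?_ ?_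
  · have hm1 : AEMeasurable h (volume.restrict V) :=
      (hh.continuousOn.mono (fun z hz => (hV₄s hz.2.2).1)).aemeasurable hVo.measurableSet
    refine AEMeasurable.aestronglyMeasurable ?_
    refine AEMeasurable.pow_const (AEMeasurable.norm (AEMeasurable.mul ?_ hm1)) _
    exact ((measurable_fst.pow_const _).mul (measurable_snd.pow_const _)).aemeasurable
  · filter_upwards [ae_restrict_mem hVo.measurableSet] with z hzV
    have hx1 : ‖z.1‖ ≤ 1 := by
      have := hzV.1.1.1
      rw [Metric.mem_ball, dist_zero_right] at this
      exact this.le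
    have hy1 : ‖z.2‖ ≤ 1 := by
      have := hzV.1.1.2
      rw [Metric.mem_ball, dist_zero_right] at this
      exact this.le
    have hw1 : ‖h z‖ ≤ 1 := (hV₄s hzV.2.2).2
    have hx0 := norm_nonneg z.1
    have hy0 := norm_nonneg z.2
    have hw0 := norm_nonneg (h z)
    rw [Real.norm_of_nonneg (Real.rpow_nonneg (norm_nonneg _) _), norm_mul, norm_mul, norm_pow,
      norm_pow]
    simp only [Pi.add_apply]
    generalize ‖z.1‖ = x at *
    generalize ‖z.2‖ = y at *
    generalize ‖h z‖ = w at *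
    have hAG := Real.geom_mean_le_arith_mean3_weighted (w₁ := 1 / 2) (w₂ := 1 / 6 + e)
      (w₃ := 1 / 3 - e) (p₁ := x ^ (-a) * y ^ (-a)) (p₂ := x ^ (-a) * w ^ (-b))
      (p₃ := w ^ (-d)) (by norm_num) (by linarith) (by linarith) (by positivity) (by positivity)
      (by positivity) (by ring)
    refine le_trans ?_ hAG
    have hw2 : 0 < 1 / 6 + e := by linarith
    have hw3 : 0 < 1 / 3 - e := by linarith
    have hapos : 0 < a := by linarith
    have hbpos : 0 < b := by linarith
    have hcomb : ∀ t : ℝ, 0 ≤ t → ∀ p q : ℝ, 0 < p → 0 < q →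
        t ^ (-p) * t ^ (-q) = t ^ (-(p + q)) := by
      intro t ht p q hp hq
      rw [neg_add, Real.rpow_add' ht (by linarith)]
    have e1 : (x ^ (-a) * y ^ (-a)) ^ (1 / 2 : ℝ) * (x ^ (-a) * w ^ (-b)) ^ (1 / 6 + e) *
        (w ^ (-d)) ^ (1 / 3 - e) =
        x ^ (-(a * (1 / 2) + a * (1 / 6 + e))) * y ^ (-(a * (1 / 2))) *
          w ^ (-(b * (1 / 6 + e) + d * (1 / 3 - e))) := by
      rw [Real.mul_rpow (by positivity) (by positivity),
        Real.mul_rpow (by positivity) (by positivity), ← Real.rpow_mul hx0, ← Real.rpow_mul hx0,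
        ← Real.rpow_mul hy0, ← Real.rpow_mul hw0, ← Real.rpow_mul hw0,
        ← hcomb x hx0 _ _ (by positivity) (by positivity),
        ← hcomb w hw0 _ _ (by positivity) (by positivity)]
      simp only [neg_mul]
      ring
    have e2 : (x ^ (2 * k) * y ^ k * w) ^ (-(2 * c)) =
        x ^ (-(4 * (k * c))) * y ^ (-(2 * (k * c))) * w ^ (-(2 * c)) := by
      rw [Real.mul_rpow (by positivity) hw0, Real.mul_rpow (by positivity) (by positivity),
        ← Real.rpow_natCast x, ← Real.rpow_natCast y, ← Real.rpow_mul hx0, ← Real.rpow_mul hy0]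
      push_cast
      ring_nf
    rw [e1, e2]
    have i1 : 4 * (k * c) ≤ a * (1 / 2) + a * (1 / 6 + e) := by
      rw [hkc, ha]; nlinarith
    have i2 : 2 * (k * c) ≤ a * (1 / 2) := by
      rw [hkc, ha]; linarith
    have i3 : 2 * c ≤ b * (1 / 6 + e) + d * (1 / 3 - e) := by
      have h1 : k * (2 * c) ≤ k * (b * (1 / 6 + e) + d * (1 / 3 - e)) := by
        have h2 : k * (b * (1 / 6 + e) + d * (1 / 3 - e)) =
            k * b * (1 / 6 + e) + (d * k) * (1 / 3 - e) := by ring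
        rw [h2, hdk]
        have h3 : b ≤ k * b := by nlinarith
        have h4 : b * (1 / 6 + e) ≤ k * b * (1 / 6 + e) :=
          mul_le_mul_of_nonneg_right h3 hw2.le
        have h5 : k * (2 * c) = 2 / 3 + e / 2 := by linarith
        rw [h5]
        rw [hb] at h4 ⊢
        nlinarith
      exact le_of_mul_le_mul_left h1 hkpos
    have j1 := SE_rpow_mono hx0 hx1 (by positivity) i1
    have j2 := SE_rpow_mono hy0 hy1 (by positivity) i2
    have j3 := SE_rpow_mono hw0 hw1 (by positivity) i3
    exact mul_le_mul (mul_le_mul j1 j2 (Real.rpow_nonneg hy0 _) (Real.rpow_nonneg hx0 _)) j3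
      (Real.rpow_nonneg hw0 _) (mul_nonneg (Real.rpow_nonneg hx0 _) (Real.rpow_nonneg hy0 _))
end

section
/- Let n ≥ 1, let U ⊆ ℂⁿ be open, let p ∈ U, let f₁, f₂ be holomorphic functions on U neither of which is identically zero near p, and let a, b > 0 be real numbers. Suppose that c_p(f₁) ≥ a, that c_p(f₂) ≥ b, and that c_p(f₁·f₂) = ab/(a+b), i.e. for every real c > ab/(a+b) the function z ↦ |f₁(z)·f₂(z)|^{-2c} fails to be integrable on every neighborhood of p. Then c_p(f₁) = a and c_p(f₂) = b. (Local form of Lemma 4.1.) -/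
open MeasureTheory

/-- The complex singularity exponent of `f` at `p`: the supremum of the set of
`c > 0` such that `‖f‖ ^ (-2c)` is integrable on some open neighborhood of `p`
with respect to Lebesgue measure on `ℂⁿ`. -/
noncomputable def singExp (n : ℕ) (f : (Fin n → ℂ) → ℂ) (p : Fin n → ℂ) : ℝ :=
  sSup {c : ℝ | 0 < c ∧ ∃ V : Set (Fin n → ℂ), IsOpen V ∧ p ∈ V ∧
    IntegrableOn (fun z => ‖f z‖ ^ (-(2 * c))) V volume}

/-- The set of integrability exponents. -/
def expSet (n : ℕ) (f : (Fin n → ℂ) → ℂ) (p : Fin n → ℂ) : Set ℝ :=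
  {c : ℝ | 0 < c ∧ ∃ V : Set (Fin n → ℂ), IsOpen V ∧ p ∈ V ∧
    IntegrableOn (fun z => ‖f z‖ ^ (-(2 * c))) V volume}

lemma exists_mem_gt {S : Set ℝ} {t : ℝ} (ht : 0 ≤ t) (h : t < sSup S) : ∃ c ∈ S, t < c := by
  apply exists_lt_of_lt_csSup _ h
  by_contra hS
  rw [Set.not_nonempty_iff_eq_empty] at hS
  rw [hS, Real.sSup_empty] at h
  linarith

lemma young_bound {x y : ℝ} (hx : 0 < x) (hy : 0 < y) (u v : ℂ) :
    ‖u * v‖ ^ (-(2 * (x * y / (x + y)))) ≤ ‖u‖ ^ (-(2 * x)) + ‖v‖ ^ (-(2 * y)) := by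
  have hc : 0 < x * y / (x + y) := by positivity
  rw [norm_mul, Real.mul_rpow (norm_nonneg _) (norm_nonneg _)]
  have hpq : ((x + y) / y).HolderConjugate ((x + y) / x) := by
    rw [Real.holderConjugate_iff]
    constructor
    · rw [lt_div_iff₀ hy]; linarith
    · field_simp
      ring
  have h := Real.young_inequality_of_nonneg
    (Real.rpow_nonneg (norm_nonneg u) (-(2 * (x * y / (x + y)))))
    (Real.rpow_nonneg (norm_nonneg v) (-(2 * (x * y / (x + y))))) hpq
  rw [← Real.rpow_mul (norm_nonneg _), ← Real.rpow_mul (norm_nonneg _)] at h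
  have e1 : -(2 * (x * y / (x + y))) * ((x + y) / y) = -(2 * x) := by field_simp
  have e2 : -(2 * (x * y / (x + y))) * ((x + y) / x) = -(2 * y) := by field_simp
  rw [e1, e2] at h
  refine h.trans (add_le_add ?_ ?_)
  · apply div_le_self (Real.rpow_nonneg (norm_nonneg _) _)
    rw [le_div_iff₀ hy]; linarith
  · apply div_le_self (Real.rpow_nonneg (norm_nonneg _) _)
    rw [le_div_iff₀ hx]; linarith

lemma exponent_le (n : ℕ)
    (U : Set (Fin n → ℂ)) (hU : IsOpen U) (p : Fin n → ℂ) (hp : p ∈ U)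
    (f₁ f₂ : (Fin n → ℂ) → ℂ)
    (hf₁ : DifferentiableOn ℂ f₁ U) (hf₂ : DifferentiableOn ℂ f₂ U) (m : ℝ)
    (hprod : ∀ c : ℝ, m < c →
      ∀ V : Set (Fin n → ℂ), IsOpen V → p ∈ V →
        ¬ IntegrableOn (fun z => ‖f₁ z * f₂ z‖ ^ (-(2 * c))) V volume)
    {x y : ℝ} (hx : x ∈ expSet n f₁ p) (hy : y ∈ expSet n f₂ p) :
    x * y / (x + y) ≤ m := by
  obtain ⟨hx0, V, hV, hpV, hiV⟩ := hx
  obtain ⟨hy0, W, hW, hpW, hiW⟩ := hy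
  by_contra! hlt
  have hO : IsOpen (U ∩ (V ∩ W)) := hU.inter (hV.inter hW)
  refine hprod _ hlt (U ∩ (V ∩ W)) hO ⟨hp, hpV, hpW⟩ ?_
  have h1 := hiV.mono_set (show U ∩ (V ∩ W) ⊆ V from fun z hz => hz.2.1)
  have h2 := hiW.mono_set (show U ∩ (V ∩ W) ⊆ W from fun z hz => hz.2.2)
  refine Integrable.mono' (h1.add h2) ?_ ?_
  · have hc : ContinuousOn (fun z => ‖f₁ z * f₂ z‖) (U ∩ (V ∩ W)) :=
      ((hf₁.continuousOn.mul hf₂.continuousOn).norm).mono Set.inter_subset_left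
    exact ((hc.aemeasurable hO.measurableSet).pow_const _).aestronglyMeasurable
  · refine Filter.Eventually.of_forall fun z => ?_
    rw [Real.norm_of_nonneg (Real.rpow_nonneg (norm_nonneg _) _)]
    exact young_bound hx0 hy0 _ _

lemma sSup_le_of {S T : Set ℝ} {a b : ℝ} (ha : 0 < a) (hb : 0 < b) (hT : b ≤ sSup T)
    (h : ∀ x ∈ S, ∀ y ∈ T, x * y / (x + y) ≤ a * b / (a + b)) : sSup S ≤ a := by
  by_contra! hlt
  obtain ⟨x, hxS, hx⟩ := exists_mem_gt ha.le hlt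
  have hx0 : 0 < x := ha.trans hx
  have hd : 0 < x * (a + b) - a * b := by nlinarith
  have hb' : a * b * x / (x * (a + b) - a * b) < b := by
    rw [div_lt_iff₀ hd]
    nlinarith [mul_pos (mul_pos hb hb) (sub_pos.2 hx)]
  have hn : 0 ≤ a * b * x / (x * (a + b) - a * b) := by positivity
  obtain ⟨y, hyT, hy⟩ := exists_mem_gt hn (hb'.trans_le hT)
  have hy0 : 0 < y := hn.trans_lt hy
  have := h x hxS y hyT
  rw [div_le_div_iff₀ (by positivity) (by positivity)] at this
  rw [div_lt_iff₀ hd] at hy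
  nlinarith

/-- Local form of Lemma 4.1: if `f₁`, `f₂` are holomorphic near `p ∈ ℂⁿ`, neither
identically zero near `p`, `a, b > 0`, `c_p(f₁) ≥ a`, `c_p(f₂) ≥ b`, and
`c_p(f₁·f₂) = ab/(a+b)` (i.e. for every `c > ab/(a+b)` the function
`‖f₁·f₂‖ ^ (-2c)` fails to be integrable on every open neighborhood of `p`),
then `c_p(f₁) = a` and `c_p(f₂) = b`. -/
theorem singExp_eq_of_product_extremal
    (n : ℕ) (hn : 1 ≤ n)
    (U : Set (Fin n → ℂ)) (hU : IsOpen U) (p : Fin n → ℂ) (hp : p ∈ U)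
    (f₁ f₂ : (Fin n → ℂ) → ℂ)
    (hf₁ : DifferentiableOn ℂ f₁ U) (hf₂ : DifferentiableOn ℂ f₂ U)
    (hnz₁ : ¬ ∀ᶠ z in nhds p, f₁ z = 0)
    (hnz₂ : ¬ ∀ᶠ z in nhds p, f₂ z = 0)
    (a b : ℝ) (ha : 0 < a) (hb : 0 < b)
    (hge₁ : a ≤ singExp n f₁ p)
    (hge₂ : b ≤ singExp n f₂ p)
    (hprod : ∀ c : ℝ, a * b / (a + b) < c →
      ∀ V : Set (Fin n → ℂ), IsOpen V → p ∈ V →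
        ¬ IntegrableOn (fun z => ‖f₁ z * f₂ z‖ ^ (-(2 * c))) V volume) :
    singExp n f₁ p = a ∧ singExp n f₂ p = b := by
  have key : ∀ x ∈ expSet n f₁ p, ∀ y ∈ expSet n f₂ p, x * y / (x + y) ≤ a * b / (a + b) :=
    fun x hx y hy => exponent_le n U hU p hp f₁ f₂ hf₁ hf₂ _ hprod hx hy
  refine ⟨le_antisymm ?_ hge₁, le_antisymm ?_ hge₂⟩
  · exact sSup_le_of (S := expSet n f₁ p) (T := expSet n f₂ p) ha hb hge₂ key
  · refine sSup_le_of (S := expSet n f₂ p) (T := expSet n f₁ p) hb ha hge₁ ?_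
    intro y hy x hx
    have := key x hx y hy
    rwa [mul_comm y x, add_comm y x, mul_comm b a, add_comm b a]
end
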